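/- arXiv:2408.11620 — 2 statements merged into one kernel-verified Lean document; each statement's English description precedes it below -/
import Mathlib

section
/- Let p be in the tipless simplex Δ*_m and q in Δ*_n, let c ∈ ℝ^{m×n}, and let (β_t)_{t≥0} be a positive, nondecreasing, concave annealing schedule (i.e. the difference sequence α_t = β_t − β_{t−1} is nonnegative and nonincreasing), with limits β_∞ = lim β_t ∈ (0, ∞] and α_∞ = lim α_t ∈ [0, ∞). Let (π_t) be the sequence generated by Annealed Sinkhorn. Then the sequence (π_t) has at least one accumulation point, and every accumulation point π_∞ of (π_t) is a minimizer over Γ(*,q) of the functional F_{α_∞,β_∞}(π) = ⟨c,π⟩ + (1/α_∞)·KL(π𝟙 | p) + (1/β_∞)·KL(π | π^ref), with the conventions 1/∞ = 0 and (1/0)·KL(p̃|p) equal to the convex indicator of the set {p} (it is 0 if p̃ = p and +∞ otherwise). -/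
open Finset Filter Topology ENNReal

noncomputable section

/-- Frobenius inner product `⟨c, π⟩ = ∑_{ij} c_ij π_ij`. -/
def frob {m n : ℕ} (c π : Matrix (Fin m) (Fin n) ℝ) : ℝ := ∑ i, ∑ j, c i j * π i j

/-- Row sums `π𝟙`. -/
def rowSum {m n : ℕ} (π : Matrix (Fin m) (Fin n) ℝ) : Fin m → ℝ := fun i => ∑ j, π i j

/-- Column sums `πᵀ𝟙`. -/
def colSum {m n : ℕ} (π : Matrix (Fin m) (Fin n) ℝ) : Fin n → ℝ := fun j => ∑ i, π i j

/-- Kullback–Leibler divergence between nonnegative vectors. -/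
def KLvec {k : ℕ} (a b : Fin k → ℝ) : ℝ := ∑ i, (a i * Real.log (a i / b i) - a i + b i)

/-- Kullback–Leibler divergence between nonnegative matrices. -/
def KLmat {m n : ℕ} (a b : Matrix (Fin m) (Fin n) ℝ) : ℝ :=
  ∑ i, ∑ j, (a i j * Real.log (a i j / b i j) - a i j + b i j)

/-- The tipless simplex `Δ*_k`: strictly positive entries summing to 1. -/
def simplexPos (k : ℕ) : Set (Fin k → ℝ) := {p | (∀ i, 0 < p i) ∧ ∑ i, p i = 1}

/-- The simplex `Δ_k`: nonnegative entries summing to 1. -/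
def simplexNN (k : ℕ) : Set (Fin k → ℝ) := {p | (∀ i, 0 ≤ p i) ∧ ∑ i, p i = 1}

/-- Transport plans `Γ(p, q)`. -/
def Gamma {m n : ℕ} (p : Fin m → ℝ) (q : Fin n → ℝ) : Set (Matrix (Fin m) (Fin n) ℝ) :=
  {π | (∀ i j, 0 ≤ π i j) ∧ rowSum π = p ∧ colSum π = q}

/-- Half-relaxed plans `Γ(*, q)`. -/
def GammaStar {m n : ℕ} (q : Fin n → ℝ) : Set (Matrix (Fin m) (Fin n) ℝ) :=
  {π | (∀ i j, 0 ≤ π i j) ∧ colSum π = q}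

/-- Reference plan `π^ref = (mn)⁻¹ 𝟙𝟙ᵀ`. -/
def piRef (m n : ℕ) : Matrix (Fin m) (Fin n) ℝ := fun _ _ => 1 / (m * n)

/-- Optimal transport value `OT(p,q)`. -/
def OTval {m n : ℕ} (c : Matrix (Fin m) (Fin n) ℝ) (p : Fin m → ℝ) (q : Fin n → ℝ) : ℝ :=
  ⨅ π : Gamma p q, frob c π.1

/-- Entropic OT objective `⟨c,π⟩ + β⁻¹ KL(π|π^ref)`. -/
def eotObj {m n : ℕ} (c : Matrix (Fin m) (Fin n) ℝ) (β : ℝ) (π : Matrix (Fin m) (Fin n) ℝ) : ℝ :=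
  frob c π + β⁻¹ * KLmat π (piRef m n)

/-- Entropic OT value `EOT_β(p,q)`. -/
def eotVal {m n : ℕ} (c : Matrix (Fin m) (Fin n) ℝ) (β : ℝ) (p : Fin m → ℝ) (q : Fin n → ℝ) : ℝ :=
  ⨅ π : Gamma p q, eotObj c β π.1

/-- Gibbs kernel `K = e^{-βc}` (entrywise). -/
def gibbs {m n : ℕ} (c : Matrix (Fin m) (Fin n) ℝ) (β : ℝ) : Matrix (Fin m) (Fin n) ℝ :=
  fun i j => Real.exp (-(β * c i j))

/-- Annealed Sinkhorn scaling vectors `(a_t, b_t)`: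
`b_0 = 𝟙`, `a_{t+1} = p ⊘ (K_t b_t)`, `b_{t+1} = q ⊘ (K_{t+1}ᵀ a_{t+1})`, `K_t = e^{-β_t c}`. -/
def sinkAB {m n : ℕ} (p : Fin m → ℝ) (q : Fin n → ℝ) (c : Matrix (Fin m) (Fin n) ℝ)
    (β : ℕ → ℝ) : ℕ → (Fin m → ℝ) × (Fin n → ℝ)
  | 0 => (fun _ => 1, fun _ => 1)
  | t + 1 =>
    let prev := sinkAB p q c β t
    let a : Fin m → ℝ := fun i => p i / ∑ j, gibbs c (β t) i j * prev.2 j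
    (a, fun j => q j / ∑ i, gibbs c (β (t + 1)) i j * a i)

/-- Annealed Sinkhorn primal iterate `π_t = diag(a_t) K_t diag(b_t)`. -/
def sinkPlan {m n : ℕ} (p : Fin m → ℝ) (q : Fin n → ℝ) (c : Matrix (Fin m) (Fin n) ℝ)
    (β : ℕ → ℝ) (t : ℕ) : Matrix (Fin m) (Fin n) ℝ :=
  fun i j => (sinkAB p q c β t).1 i * gibbs c (β t) i j * (sinkAB p q c β t).2 j

/-- `ℓ¹` norm of a vector. -/
def l1vec {k : ℕ} (a : Fin k → ℝ) : ℝ := ∑ i, |a i|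

/-- Oscillation semi-norm `‖c‖_osc = max c - min c`. -/
def cOsc {m n : ℕ} (c : Matrix (Fin m) (Fin n) ℝ) : ℝ :=
  (⨆ i, ⨆ j, c i j) - ⨅ i, ⨅ j, c i j

/-- `‖log p‖_∞`. -/
def logSup {k : ℕ} (p : Fin k → ℝ) : ℝ := ⨆ i, |Real.log (p i)|

/-- The rounding ("projection") procedure of Altschuler et al. (Algorithm 3). -/
def roundPlan {m n : ℕ} (p : Fin m → ℝ) (q : Fin n → ℝ) (π : Matrix (Fin m) (Fin n) ℝ) :
    Matrix (Fin m) (Fin n) ℝ :=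
  let π' : Matrix (Fin m) (Fin n) ℝ := fun i j => min 1 (p i / rowSum π i) * π i j
  let π'' : Matrix (Fin m) (Fin n) ℝ := fun i j => π' i j * min 1 (q j / colSum π' j)
  fun i j => π'' i j +
    (p i - rowSum π'' i) * (q j - colSum π'' j) / l1vec (fun i' => p i' - rowSum π'' i')

/-- Relaxed entropic objective `F^reg(π) = ⟨c,π⟩ + α⁻¹ KL(π𝟙|p) + β⁻¹ KL(π|π^ref)`. -/
def Freg {m n : ℕ} (c : Matrix (Fin m) (Fin n) ℝ) (p : Fin m → ℝ) (α β : ℝ)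
    (π : Matrix (Fin m) (Fin n) ℝ) : ℝ :=
  frob c π + α⁻¹ * KLvec (rowSum π) p + β⁻¹ * KLmat π (piRef m n)

/-- Dual functional for the relaxed entropic problem. -/
def dualFun {m n : ℕ} (p : Fin m → ℝ) (q : Fin n → ℝ) (c : Matrix (Fin m) (Fin n) ℝ)
    (α β : ℝ) (u : Fin m → ℝ) (v : Fin n → ℝ) : ℝ :=
  α⁻¹ * (∑ i, (1 - Real.exp (-(α * u i))) * p i) + ∑ j, v j * q j
    - β⁻¹ * (∑ i, ∑ j, Real.exp (β * (u i + v j - c i j)) * piRef m n i j) + β⁻¹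

/-- Dual functional of entropic OT. -/
def eotDual {m n : ℕ} (p : Fin m → ℝ) (q : Fin n → ℝ) (c : Matrix (Fin m) (Fin n) ℝ)
    (β : ℝ) (u : Fin m → ℝ) (v : Fin n → ℝ) : ℝ :=
  ∑ i, p i * u i + ∑ j, q j * v j
    + β⁻¹ * (1 - ∑ i, ∑ j, piRef m n i j * Real.exp (β * (u i + v j - c i j)))

/-- The set `C_β` of plans of the form `diag(a) e^{-βc} diag(b)` with `a, b ≥ 0`. -/
def scalingSet {m n : ℕ} (c : Matrix (Fin m) (Fin n) ℝ) (β : ℝ) :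
    Set (Matrix (Fin m) (Fin n) ℝ) :=
  {π | ∃ a : Fin m → ℝ, ∃ b : Fin n → ℝ, (∀ i, 0 ≤ a i) ∧ (∀ j, 0 ≤ b j) ∧
    π = fun i j => a i * Real.exp (-(β * c i j)) * b j}


/-- The limiting relaxed functional `F_{α∞,β∞}` (with conventions `1/∞ = 0` and
`(1/0)·KL(·|p) = ι_{p}`), taking values in `EReal`. -/
def Fdoubly {m n : ℕ} (c : Matrix (Fin m) (Fin n) ℝ) (p : Fin m → ℝ)
    (αinf : ℝ) (βinf : ℝ≥0∞) (π : Matrix (Fin m) (Fin n) ℝ) : EReal :=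
  ((frob c π + (βinf⁻¹).toReal * KLmat π (piRef m n) : ℝ) : EReal) +
    (if αinf = 0 then (if rowSum π = p then (0 : EReal) else ⊤)
     else ((αinf⁻¹ * KLvec (rowSum π) p : ℝ) : EReal))

/-!
A step of Annealed Sinkhorn from `π_t` is a mirror descent step, with Bregman divergence `KL`, on
the half-relaxed objective `α_{t+1} ⟨c,π⟩ + KL(π𝟙|p)` over `Γ(*,q)`. Since the objective is smooth
relative to `KL`, this gives a three-point inequality, and because `α_t` is nonincreasing, shifting
the cost to be nonnegative turns the objective into a Lyapunov function. The terms `KL(R|π_t)`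
telescope, so by Cesàro averaging every accumulation point minimizes `α_∞ ⟨c,π⟩ + KL(π𝟙|p)`.

If `α_∞ > 0`, then `β_∞ = ∞` and this is the claim up to the factor `α_∞`. If `α_∞ = 0`, it only
says that the accumulation point has row marginal `p`. The rest comes from the scaling form of
`π_t`, which makes it optimal for entropic transport between its own marginals: a competitor in
`Γ(p,q)` is perturbed continuously into one for the marginals of `π_t`, and optimality passes to
the limit.
-/

namespace AnnealedSinkhorn

open InformationTheory

section KullbackLeibler

variable {k m n : ℕ}

lemma mul_log_div_sub_add (x : ℝ) {y : ℝ} (hy : y ≠ 0) :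
    x * Real.log (x / y) - x + y = y * klFun (x / y) := by
  rw [klFun_apply]
  field_simp
  ring

lemma KLvec_eq_sum_klFun (a : Fin k → ℝ) {b : Fin k → ℝ} (hb : ∀ i, b i ≠ 0) :
    KLvec a b = ∑ i, b i * klFun (a i / b i) :=
  sum_congr rfl fun i _ => mul_log_div_sub_add (a i) (hb i)

lemma KLvec_self (a : Fin k → ℝ) : KLvec a a = 0 := by
  refine sum_eq_zero fun i _ => ?_
  rcases eq_or_ne (a i) 0 with h | h <;> simp [h]

lemma KLvec_nonneg {a b : Fin k → ℝ} (ha : ∀ i, 0 ≤ a i) (hb : ∀ i, 0 < b i) :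
    0 ≤ KLvec a b := by
  rw [KLvec_eq_sum_klFun a fun i => (hb i).ne']
  exact sum_nonneg fun i _ => mul_nonneg (hb i).le (klFun_nonneg (div_nonneg (ha i) (hb i).le))

lemma KLvec_eq_zero_iff {a b : Fin k → ℝ} (ha : ∀ i, 0 ≤ a i) (hb : ∀ i, 0 < b i) :
    KLvec a b = 0 ↔ a = b := by
  have hab : ∀ i, 0 ≤ a i / b i := fun i => div_nonneg (ha i) (hb i).le
  rw [KLvec_eq_sum_klFun a fun i => (hb i).ne',
    sum_eq_zero_iff_of_nonneg fun i _ => mul_nonneg (hb i).le (klFun_nonneg (hab i)), funext_iff]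
  simp only [mem_univ, forall_const, mul_eq_zero, (hb _).ne', false_or,
    klFun_eq_zero_iff (hab _), div_eq_one_iff_eq (hb _).ne']

lemma continuous_KLvec_left {b : Fin k → ℝ} (hb : ∀ i, b i ≠ 0) :
    Continuous fun a => KLvec a b := by
  simp only [KLvec_eq_sum_klFun _ hb]
  fun_prop

lemma KLvec_sub_KLvec (r : Fin k → ℝ) {a b : Fin k → ℝ} (ha : ∀ i, 0 < a i)
    (hb : ∀ i, 0 < b i) :
    KLvec r a - KLvec r b = ∑ i, r i * Real.log (b i / a i) + (∑ i, a i - ∑ i, b i) := by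
  simp only [KLvec, ← sum_sub_distrib, ← sum_add_distrib]
  refine sum_congr rfl fun i _ => ?_
  rcases eq_or_ne (r i) 0 with hr | hr
  · simp [hr]
  · rw [Real.log_div hr (ha i).ne', Real.log_div hr (hb i).ne',
      Real.log_div (hb i).ne' (ha i).ne']
    ring

lemma log_sum_inequality {a b : Fin k → ℝ} (ha : ∀ i, 0 ≤ a i) (hb : ∀ i, 0 < b i) :
    (∑ i, a i) * Real.log ((∑ i, a i) / ∑ i, b i) - ∑ i, a i + ∑ i, b i ≤ KLvec a b := by
  rcases isEmpty_or_nonempty (Fin k) with _ | _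
  · simp [KLvec]
  have hsum : 0 < ∑ i, b i := sum_pos (fun i _ => hb i) univ_nonempty
  have hmean : univ.centerMass b (fun i => a i / b i) = (∑ i, a i) / ∑ i, b i := by
    simp only [centerMass, smul_eq_mul, mul_div_cancel₀ _ (hb _).ne', inv_mul_eq_div]
  have jensen := convexOn_klFun.map_centerMass_le (t := univ) (w := b)
    (p := fun i => a i / b i) (fun i _ => (hb i).le) hsum fun i _ => div_nonneg (ha i) (hb i).le
  rw [hmean, centerMass, smul_eq_mul, inv_mul_eq_div, le_div_iff₀' hsum] at jensen
  rw [mul_log_div_sub_add _ hsum.ne', KLvec_eq_sum_klFun a fun i => (hb i).ne']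
  exact jensen

lemma KLmat_eq_sum_KLvec (P Q : Matrix (Fin m) (Fin n) ℝ) :
    KLmat P Q = ∑ i, KLvec (P i) (Q i) := rfl

lemma KLmat_self (P : Matrix (Fin m) (Fin n) ℝ) : KLmat P P = 0 :=
  sum_eq_zero fun i _ => KLvec_self (P i)

lemma KLmat_nonneg {P Q : Matrix (Fin m) (Fin n) ℝ} (hP : ∀ i j, 0 ≤ P i j)
    (hQ : ∀ i j, 0 < Q i j) : 0 ≤ KLmat P Q :=
  sum_nonneg fun i _ => KLvec_nonneg (hP i) (hQ i)

lemma continuous_KLmat_left {Q : Matrix (Fin m) (Fin n) ℝ} (hQ : ∀ i j, Q i j ≠ 0) :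
    Continuous fun P => KLmat P Q :=
  continuous_finsetSum _ fun i _ => (continuous_KLvec_left (hQ i)).comp (continuous_apply i)

lemma KLvec_rowSum_le_KLmat {P Q : Matrix (Fin m) (Fin n) ℝ} (hP : ∀ i j, 0 ≤ P i j)
    (hQ : ∀ i j, 0 < Q i j) : KLvec (rowSum P) (rowSum Q) ≤ KLmat P Q :=
  sum_le_sum fun i _ => log_sum_inequality (hP i) (hQ i)

end KullbackLeibler

section Scaling

variable {m n : ℕ} {c P P' R : Matrix (Fin m) (Fin n) ℝ} {u p : Fin m → ℝ} {v : Fin n → ℝ} {s : ℝ}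

lemma gibbs_pos (c : Matrix (Fin m) (Fin n) ℝ) (s : ℝ) (i : Fin m) (j : Fin n) :
    0 < gibbs c s i j := Real.exp_pos _

lemma sum_plan_mul_potentials (c R : Matrix (Fin m) (Fin n) ℝ) (f : Fin m → ℝ) (g : Fin n → ℝ)
    (s : ℝ) :
    ∑ i, ∑ j, R i j * (f i - s * c i j + g j) =
      ∑ i, rowSum R i * f i - s * frob c R + ∑ j, colSum R j * g j := by
  have hsplit : ∀ i j, R i j * (f i - s * c i j + g j) =
      R i j * f i - s * (c i j * R i j) + R i j * g j := fun i j => by ring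
  simp only [hsplit, sum_add_distrib, sum_sub_distrib, rowSum, colSum, frob, mul_sum, sum_mul]
  rw [sum_comm (f := fun i j => R i j * g j)]

lemma KLmat_sub_KLmat_of_scaling (R : Matrix (Fin m) (Fin n) ℝ) (hP : ∀ i j, 0 < P i j)
    (hu : ∀ i, 0 < u i) (hv : ∀ j, 0 < v j)
    (hP' : ∀ i j, P' i j = u i * (P i j * gibbs c s i j) * v j) :
    KLmat R P - KLmat R P' = ∑ i, rowSum R i * Real.log (u i) - s * frob c R +
      ∑ j, colSum R j * Real.log (v j) + (∑ i, rowSum P i - ∑ i, rowSum P' i) := by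
  have hpos : ∀ i j, 0 < P' i j := fun i j => by
    rw [hP']; exact mul_pos (mul_pos (hu i) (mul_pos (hP i j) (gibbs_pos c s i j))) (hv j)
  have hlog : ∀ i j, Real.log (P' i j / P i j) = Real.log (u i) - s * c i j + Real.log (v j) := by
    intro i j
    have hratio : P' i j / P i j = u i * gibbs c s i j * v j := by
      rw [hP', div_eq_iff (hP i j).ne']; ring
    rw [hratio, Real.log_mul (mul_pos (hu i) (gibbs_pos c s i j)).ne' (hv j).ne',
      Real.log_mul (hu i).ne' (gibbs_pos c s i j).ne', gibbs, Real.log_exp]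
    ring
  rw [← sum_plan_mul_potentials, KLmat_eq_sum_KLvec, KLmat_eq_sum_KLvec, ← sum_sub_distrib]
  simp only [KLvec_sub_KLvec (R _) (hP _) (hpos _), hlog, sum_add_distrib, sum_sub_distrib, rowSum]

/-- The half-relaxed transport objective, multiplied by `α` so that it remains meaningful at
`α = 0`: it is `α` times `⟨c,π⟩ + α⁻¹ KL(π𝟙|p)`. -/
def halfRelaxedObj (c : Matrix (Fin m) (Fin n) ℝ) (p : Fin m → ℝ) (α : ℝ)
    (π : Matrix (Fin m) (Fin n) ℝ) : ℝ :=
  α * frob c π + KLvec (rowSum π) p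

-- `P'` minimizes `KL(· | P)` plus the objective linearised at `P` among plans with its column sums.
-- As `KL` of row sums is convex and dominated by `KL` of plans, the linearisation errors at `R` and
-- at `P'` both have the favourable sign.
lemma halfRelaxedObj_le_of_sinkhorn_step (hp : ∀ i, 0 < p i) (hP : ∀ i j, 0 < P i j)
    (hr : ∀ i, 0 < rowSum P i) (hv : ∀ j, 0 < v j)
    (hP' : ∀ i j, P' i j = p i / rowSum P i * (P i j * gibbs c s i j) * v j)
    (hR : ∀ i j, 0 ≤ R i j) (hcol : colSum R = colSum P') :
    halfRelaxedObj c p s P' ≤ halfRelaxedObj c p s R + KLmat R P - KLmat R P' := by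
  have hu : ∀ i, 0 < p i / rowSum P i := fun i => div_pos (hp i) (hr i)
  have hP'pos : ∀ i j, 0 ≤ P' i j := fun i j => by
    rw [hP']; exact (mul_pos (mul_pos (hu i) (mul_pos (hP i j) (gibbs_pos c s i j))) (hv j)).le
  have plan_R := KLmat_sub_KLmat_of_scaling R hP hu hv hP'
  have plan_P' := KLmat_sub_KLmat_of_scaling P' hP hu hv hP'
  have row_R := KLvec_sub_KLvec (rowSum R) hr hp
  have row_P' := KLvec_sub_KLvec (rowSum P') hr hp
  have nonneg : 0 ≤ KLvec (rowSum R) (rowSum P) :=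
    KLvec_nonneg (fun i => sum_nonneg fun j _ => hR i j) hr
  have marginal_le := KLvec_rowSum_le_KLmat hP'pos hP
  rw [KLmat_self] at plan_P'
  rw [hcol] at plan_R
  simp only [halfRelaxedObj]
  linarith

lemma piRef_pos [NeZero m] [NeZero n] (i : Fin m) (j : Fin n) : 0 < piRef m n i j := by
  have hm := Nat.pos_of_neZero m
  have hn := Nat.pos_of_neZero n
  simp only [piRef]
  positivity

lemma eotObj_le_of_mem_scalingSet [NeZero m] [NeZero n] (hs : 0 < s) (hP : P ∈ scalingSet c s)
    (hPpos : ∀ i j, 0 < P i j) (hR : R ∈ Gamma (rowSum P) (colSum P)) :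
    eotObj c s P ≤ eotObj c s R := by
  obtain ⟨a, b, ha, hb, hab⟩ := hP
  have hne : ∀ i j, a i ≠ 0 ∧ b j ≠ 0 := fun i j => by
    have := (hPpos i j).ne'
    simp only [hab, mul_ne_zero_iff] at this
    exact ⟨this.1.1, this.2⟩
  have hform : ∀ i j, P i j = a i / piRef m n i j * (piRef m n i j * gibbs c s i j) * b j :=
    fun i j => by
      rw [hab, ← mul_assoc, div_mul_cancel₀ _ (piRef_pos i j).ne', gibbs]
  have identity (Q : Matrix (Fin m) (Fin n) ℝ) :=
    KLmat_sub_KLmat_of_scaling Q (u := fun i => a i / piRef m n i 0) piRef_pos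
      (fun i => div_pos ((ha i).lt_of_ne' (hne i 0).1) (piRef_pos i 0))
      (fun j => (hb j).lt_of_ne' (hne 0 j).2) hform
  have plan_P := identity P
  have plan_R := identity R
  rw [KLmat_self] at plan_P
  rw [hR.2.1, hR.2.2] at plan_R
  have hgap : 0 ≤ KLmat R P := KLmat_nonneg hR.1 hPpos
  have hscaled : s * frob c P + KLmat P (piRef m n) ≤ s * frob c R + KLmat R (piRef m n) := by
    linarith
  have := mul_le_mul_of_nonneg_left hscaled (inv_pos.2 hs).le
  simpa only [eotObj, mul_add, inv_mul_cancel_left₀ hs.ne'] using this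

end Scaling

section Sinkhorn

variable {m n : ℕ} [NeZero m] [NeZero n] {p : Fin m → ℝ} {q : Fin n → ℝ}

lemma sinkAB_pos (c : Matrix (Fin m) (Fin n) ℝ) (β : ℕ → ℝ) (hp : ∀ i, 0 < p i)
    (hq : ∀ j, 0 < q j) (t : ℕ) :
    (∀ i, 0 < (sinkAB p q c β t).1 i) ∧ ∀ j, 0 < (sinkAB p q c β t).2 j := by
  induction t with
  | zero => simp [sinkAB]
  | succ t ih =>
    have ha : ∀ i, 0 < (sinkAB p q c β (t + 1)).1 i := fun i =>
      div_pos (hp i) (sum_pos (fun j _ => mul_pos (gibbs_pos c _ i j) (ih.2 j)) univ_nonempty)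
    exact ⟨ha, fun j =>
      div_pos (hq j) (sum_pos (fun i _ => mul_pos (gibbs_pos c _ i j) (ha i)) univ_nonempty)⟩

lemma sinkPlan_pos (c : Matrix (Fin m) (Fin n) ℝ) (β : ℕ → ℝ) (hp : ∀ i, 0 < p i)
    (hq : ∀ j, 0 < q j) (t : ℕ) (i : Fin m) (j : Fin n) : 0 < sinkPlan p q c β t i j :=
  have h := sinkAB_pos c β hp hq t
  mul_pos (mul_pos (h.1 i) (gibbs_pos c _ i j)) (h.2 j)

lemma sinkPlan_mem_scalingSet (c : Matrix (Fin m) (Fin n) ℝ) (β : ℕ → ℝ) (hp : ∀ i, 0 < p i)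
    (hq : ∀ j, 0 < q j) (t : ℕ) : sinkPlan p q c β t ∈ scalingSet c (β t) :=
  have h := sinkAB_pos c β hp hq t
  ⟨_, _, fun i => (h.1 i).le, fun j => (h.2 j).le, rfl⟩

lemma sinkPlan_succ_mem_GammaStar (c : Matrix (Fin m) (Fin n) ℝ) (β : ℕ → ℝ)
    (hp : ∀ i, 0 < p i) (hq : ∀ j, 0 < q j) (t : ℕ) :
    sinkPlan p q c β (t + 1) ∈ GammaStar (m := m) q := by
  refine ⟨fun i j => (sinkPlan_pos c β hp hq (t + 1) i j).le, funext fun j => ?_⟩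
  set a := (sinkAB p q c β (t + 1)).1
  have hsum : 0 < ∑ i, gibbs c (β (t + 1)) i j * a i :=
    sum_pos (fun i _ => mul_pos (gibbs_pos c _ i j) ((sinkAB_pos c β hp hq (t + 1)).1 i))
      univ_nonempty
  calc colSum (sinkPlan p q c β (t + 1)) j
      = (∑ i, gibbs c (β (t + 1)) i j * a i) *
          (q j / ∑ i, gibbs c (β (t + 1)) i j * a i) := by
        rw [colSum, sum_mul]
        exact sum_congr rfl fun i _ => congrArg (· * _) (mul_comm (a i) _)
    _ = q j := mul_div_cancel₀ _ hsum.ne'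

lemma sinkPlan_succ (c : Matrix (Fin m) (Fin n) ℝ) (β : ℕ → ℝ) (hp : ∀ i, 0 < p i)
    (hq : ∀ j, 0 < q j) (t : ℕ) (i : Fin m) (j : Fin n) :
    sinkPlan p q c β (t + 1) i j = p i / rowSum (sinkPlan p q c β t) i *
      (sinkPlan p q c β t i j * gibbs c (β (t + 1) - β t) i j) *
      ((sinkAB p q c β (t + 1)).2 j / (sinkAB p q c β t).2 j) := by
  obtain ⟨ha, hb⟩ := sinkAB_pos c β hp hq t
  set S := ∑ j, gibbs c (β t) i j * (sinkAB p q c β t).2 j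
  have hS : 0 < S := sum_pos (fun j _ => mul_pos (gibbs_pos c _ i j) (hb j)) univ_nonempty
  have hrow : rowSum (sinkPlan p q c β t) i = (sinkAB p q c β t).1 i * S := by
    simp only [rowSum, sinkPlan, mul_assoc, ← mul_sum, S]
  have ha_succ : (sinkAB p q c β (t + 1)).1 i = p i / S := rfl
  have hgibbs : gibbs c (β (t + 1)) i j = gibbs c (β t) i j * gibbs c (β (t + 1) - β t) i j := by
    simp only [gibbs, ← Real.exp_add]
    ring_nf
  have := (ha i).ne'
  have := (hb j).ne'
  rw [hrow, sinkPlan, sinkPlan, ha_succ, hgibbs]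
  field_simp

lemma halfRelaxedObj_sinkPlan_succ_le (c : Matrix (Fin m) (Fin n) ℝ) (β : ℕ → ℝ)
    (hp : ∀ i, 0 < p i) (hq : ∀ j, 0 < q j) (t : ℕ) {R : Matrix (Fin m) (Fin n) ℝ}
    (hR : R ∈ GammaStar (m := m) q) :
    halfRelaxedObj c p (β (t + 1) - β t) (sinkPlan p q c β (t + 1)) ≤
      halfRelaxedObj c p (β (t + 1) - β t) R + KLmat R (sinkPlan p q c β t) -
        KLmat R (sinkPlan p q c β (t + 1)) :=
  have hP := sinkPlan_pos c β hp hq t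
  halfRelaxedObj_le_of_sinkhorn_step hp hP (fun i => sum_pos (fun j _ => hP i j) univ_nonempty)
    (fun j => div_pos ((sinkAB_pos c β hp hq (t + 1)).2 j) ((sinkAB_pos c β hp hq t).2 j))
    (sinkPlan_succ c β hp hq t) hR.1
    (hR.2.trans (sinkPlan_succ_mem_GammaStar c β hp hq t).2.symm)

end Sinkhorn

section Topology

variable {m n : ℕ}

lemma continuous_frob (c : Matrix (Fin m) (Fin n) ℝ) : Continuous (frob c) := by
  unfold frob
  fun_prop

lemma continuous_rowSum : Continuous (rowSum : Matrix (Fin m) (Fin n) ℝ → Fin m → ℝ) := by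
  unfold rowSum
  fun_prop

lemma continuous_colSum : Continuous (colSum : Matrix (Fin m) (Fin n) ℝ → Fin n → ℝ) := by
  unfold colSum
  fun_prop

lemma isClosed_GammaStar (q : Fin n → ℝ) : IsClosed (GammaStar (m := m) q) := by
  have hentries : IsClosed {π : Matrix (Fin m) (Fin n) ℝ | ∀ i j, 0 ≤ π i j} := by
    simp only [Set.ofPred_forall]
    exact isClosed_iInter fun i => isClosed_iInter fun j =>
      isClosed_le continuous_const (by fun_prop)
  exact hentries.inter (isClosed_eq continuous_colSum continuous_const)

lemma isCompact_GammaStar (q : Fin n → ℝ) : IsCompact (GammaStar (m := m) q) := by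
  have hbox : IsCompact (Set.univ.pi fun _ : Fin m => Set.univ.pi fun j => Set.Icc 0 (q j)) :=
    isCompact_univ_pi fun _ => isCompact_univ_pi fun _ => isCompact_Icc
  refine hbox.of_isClosed_subset (isClosed_GammaStar q) fun π hπ i _ j _ => ⟨hπ.1 i j, ?_⟩
  rw [← hπ.2]
  exact single_le_sum (f := fun i => π i j) (fun i _ => hπ.1 i j) (mem_univ i)

lemma exists_neg_le_frob (c : Matrix (Fin m) (Fin n) ℝ) (q : Fin n → ℝ) :
    ∃ C, ∀ P ∈ GammaStar (m := m) q, -C ≤ frob c P := by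
  obtain ⟨B, hB⟩ := (isCompact_GammaStar q).bddBelow_image (continuous_frob c).continuousOn
  exact ⟨-B, fun P hP => by simpa using hB (Set.mem_image_of_mem _ hP)⟩

lemma exists_continuous_scale [NeZero m] {p : Fin m → ℝ} (hp : ∀ i, 0 < p i) :
    ∃ l : (Fin m → ℝ) → ℝ, Continuous l ∧ l p = 1 ∧
      ∀ r, (∀ i, 0 ≤ r i) → 0 ≤ l r ∧ ∀ i, l r * p i ≤ r i := by
  refine ⟨fun r => univ.inf' univ_nonempty fun i => r i / p i,
    Continuous.finset_inf'_apply _ fun i _ => by fun_prop, ?_, fun r hr => ⟨?_, fun i => ?_⟩⟩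
  · simp [div_self (hp _).ne']
  · exact le_inf' _ _ fun i _ => div_nonneg (hr i) (hp i).le
  · rw [← le_div_iff₀ (hp i)]
    exact inf'_le _ (mem_univ i)

lemma sum_rowSum_eq_sum_colSum (P : Matrix (Fin m) (Fin n) ℝ) :
    ∑ i, rowSum P i = ∑ j, colSum P j := sum_comm

-- Keep the largest multiple `l • π` whose row sums are below `r`, and spread the missing mass
-- independently with column profile `q`.
lemma exists_continuous_selection_Gamma [NeZero m] [NeZero n] {p : Fin m → ℝ} {q : Fin n → ℝ}
    (hp : ∀ i, 0 < p i) (hq : ∀ j, 0 < q j) {π : Matrix (Fin m) (Fin n) ℝ} (hπ : π ∈ Gamma p q) :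
    ∃ Q : (Fin m → ℝ) → Matrix (Fin m) (Fin n) ℝ, Continuous Q ∧ Q p = π ∧
      ∀ r, (∀ i, 0 ≤ r i) → ∑ i, r i = ∑ j, q j → Q r ∈ Gamma r q := by
  obtain ⟨l, hl, hlp, hlr⟩ := exists_continuous_scale hp
  obtain ⟨hπ0, hrow, hcol⟩ := hπ
  have hrow_i : ∀ i, ∑ j, π i j = p i := fun i => congrFun hrow i
  have hcol_j : ∀ j, ∑ i, π i j = q j := fun j => congrFun hcol j
  have hmass : ∑ i, p i = ∑ j, q j := by rw [← hrow, ← hcol, sum_rowSum_eq_sum_colSum]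
  have hq_pos : 0 < ∑ j, q j := sum_pos (fun j _ => hq j) univ_nonempty
  refine ⟨fun r i j => l r * π i j + (r i - l r * p i) * (q j / ∑ j, q j), ?_, ?_,
    fun r hr hsum => ⟨fun i j => ?_, funext fun i => ?_, funext fun j => ?_⟩⟩
  · exact continuous_matrix fun i j => by fun_prop
  · ext i j
    simp [hlp]
  · have hl_nonneg := mul_nonneg (hlr r hr).1 (hπ0 i j)
    have hrest := mul_nonneg (sub_nonneg.2 ((hlr r hr).2 i)) (div_pos (hq j) hq_pos).le
    exact add_nonneg hl_nonneg hrest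
  · simp only [rowSum, sum_add_distrib, ← mul_sum, ← sum_div, hrow_i, div_self hq_pos.ne']
    ring
  · simp only [colSum, sum_add_distrib, ← mul_sum, ← sum_mul, sum_sub_distrib, hcol_j, hsum, hmass]
    field_simp
    ring

end Topology

section Schedule

lemma le_of_tendsto_of_forall_le_add_sub {R D : ℕ → ℝ} {L G B : ℝ}
    (hR : Tendsto R atTop (𝓝 G)) (hD : ∀ᶠ t in atTop, D t ≤ B)
    (h : ∀ t, L ≤ R t + (D (t + 1) - D t)) : L ≤ G := by
  have hlim : Tendsto (fun N : ℕ => (N : ℝ)⁻¹ * ∑ t ∈ range N, R t + (N : ℝ)⁻¹ * (B - D 0))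
      atTop (𝓝 G) := by
    simpa using hR.cesaro.add (tendsto_inv_atTop_nhds_zero_nat.mul_const (B - D 0))
  refine ge_of_tendsto hlim ?_
  filter_upwards [hD, eventually_gt_atTop 0] with N hN hpos
  have hsum : N * L ≤ ∑ t ∈ range N, R t + (D N - D 0) := by
    have := card_nsmul_le_sum (range N) (fun t => R t + (D (t + 1) - D t)) L fun t _ => h t
    rwa [card_range, nsmul_eq_mul, sum_add_distrib, sum_range_sub] at this
  rw [← mul_add, inv_mul_eq_div, le_div_iff₀' (by exact_mod_cast hpos)]
  linarith

variable {β : ℕ → ℝ} {βinf : ℝ≥0∞} {αinf : ℝ}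

lemma eventually_pos_of_tendsto_ofReal (hβinf0 : βinf ≠ 0)
    (hβinf : Tendsto (fun t => ENNReal.ofReal (β t)) atTop (𝓝 βinf)) :
    ∀ᶠ t in atTop, 0 < β t :=
  (hβinf.eventually_const_lt hβinf0.bot_lt).mono fun _ => ENNReal.ofReal_pos.1

lemma tendsto_inv_of_tendsto_ofReal (hβinf0 : βinf ≠ 0)
    (hβinf : Tendsto (fun t => ENNReal.ofReal (β t)) atTop (𝓝 βinf)) :
    Tendsto (fun t => (β t)⁻¹) atTop (𝓝 (βinf⁻¹).toReal) := by
  refine ((ENNReal.tendsto_toReal (ENNReal.inv_ne_top.2 hβinf0)).comp hβinf.inv).congr' ?_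
  filter_upwards [eventually_pos_of_tendsto_ofReal hβinf0 hβinf] with t ht
  rw [Function.comp_apply, ENNReal.toReal_inv, ENNReal.toReal_ofReal ht.le]

lemma increment_limit_nonneg (hβinf0 : βinf ≠ 0)
    (hβinf : Tendsto (fun t => ENNReal.ofReal (β t)) atTop (𝓝 βinf))
    (hαinf : Tendsto (fun t => β (t + 1) - β t) atTop (𝓝 αinf)) : 0 ≤ αinf :=
  le_of_tendsto_of_forall_le_add_sub (D := fun t => -β t) (B := 0) hαinf
    ((eventually_pos_of_tendsto_ofReal hβinf0 hβinf).mono fun _ ht => (neg_neg_of_pos ht).le)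
    fun t => by linarith

lemma eq_top_of_increment_limit_ne_zero (hβinf0 : βinf ≠ 0)
    (hβinf : Tendsto (fun t => ENNReal.ofReal (β t)) atTop (𝓝 βinf))
    (hαinf : Tendsto (fun t => β (t + 1) - β t) atTop (𝓝 αinf)) (hα : αinf ≠ 0) : βinf = ⊤ := by
  by_contra htop
  have hinv_ne : (βinf⁻¹).toReal ≠ 0 :=
    ENNReal.toReal_ne_zero.2 ⟨ENNReal.inv_ne_zero.2 htop, ENNReal.inv_ne_top.2 hβinf0⟩
  have hβ : Tendsto β atTop (𝓝 (βinf⁻¹).toReal⁻¹) := by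
    simpa only [inv_inv] using (tendsto_inv_of_tendsto_ofReal hβinf0 hβinf).inv₀ hinv_ne
  have hdiff := (hβ.comp (tendsto_add_atTop_nat 1)).sub hβ
  rw [sub_self] at hdiff
  exact hα (tendsto_nhds_unique hαinf hdiff)

end Schedule

section AccumulationPoints

variable {m n : ℕ} [NeZero m] [NeZero n] {p : Fin m → ℝ} {q : Fin n → ℝ}
  {c z R : Matrix (Fin m) (Fin n) ℝ} {β : ℕ → ℝ} {βinf : ℝ≥0∞} {αinf : ℝ}

lemma eventually_sinkPlan_mem_GammaStar (c : Matrix (Fin m) (Fin n) ℝ) (β : ℕ → ℝ)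
    (hp : ∀ i, 0 < p i) (hq : ∀ j, 0 < q j) :
    ∀ᶠ t in atTop, sinkPlan p q c β t ∈ GammaStar (m := m) q := by
  filter_upwards [eventually_ge_atTop 1] with t ht
  obtain ⟨s, rfl⟩ := Nat.exists_eq_add_of_le' ht
  exact sinkPlan_succ_mem_GammaStar c β hp hq s

lemma exists_mapClusterPt_sinkPlan (c : Matrix (Fin m) (Fin n) ℝ) (β : ℕ → ℝ)
    (hp : ∀ i, 0 < p i) (hq : ∀ j, 0 < q j) :
    ∃ z, MapClusterPt z atTop (sinkPlan p q c β) :=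
  let ⟨z, _, hz⟩ := (isCompact_GammaStar q).exists_mapClusterPt_of_frequently
    (eventually_sinkPlan_mem_GammaStar c β hp hq).frequently
  ⟨z, hz⟩

lemma mem_GammaStar_of_mapClusterPt (hp : ∀ i, 0 < p i) (hq : ∀ j, 0 < q j)
    (hz : MapClusterPt z atTop (sinkPlan p q c β)) : z ∈ GammaStar q :=
  (isClosed_GammaStar q).mem_of_mapClusterPt hz (eventually_sinkPlan_mem_GammaStar c β hp hq)

/-- The Lyapunov function of Annealed Sinkhorn: the objective that the step from `t` to `t + 1`
decreases, with the cost shifted by `C`. -/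
def lyapunov (p : Fin m → ℝ) (q : Fin n → ℝ) (c : Matrix (Fin m) (Fin n) ℝ) (β : ℕ → ℝ) (C : ℝ)
    (t : ℕ) : ℝ :=
  halfRelaxedObj c p (β (t + 1) - β t) (sinkPlan p q c β t) + (β (t + 1) - β t) * C

lemma lyapunov_succ_le (hp : ∀ i, 0 < p i) (hq : ∀ j, 0 < q j)
    (hβconc : ∀ t, β (t + 2) - β (t + 1) ≤ β (t + 1) - β t) {C : ℝ}
    (hC : ∀ P ∈ GammaStar (m := m) q, -C ≤ frob c P) (t : ℕ) (hR : R ∈ GammaStar q) :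
    lyapunov p q c β C (t + 1) ≤ halfRelaxedObj c p (β (t + 1) - β t) R +
      (β (t + 1) - β t) * C +
        (KLmat R (sinkPlan p q c β t) - KLmat R (sinkPlan p q c β (t + 1))) := by
  have hstep := halfRelaxedObj_sinkPlan_succ_le c β hp hq t hR
  have hcost : 0 ≤ frob c (sinkPlan p q c β (t + 1)) + C := by
    linarith [hC _ (sinkPlan_succ_mem_GammaStar c β hp hq t)]
  have hconc := mul_le_mul_of_nonneg_right (hβconc t) hcost
  simp only [lyapunov, halfRelaxedObj] at hstep ⊢
  linarith

lemma antitoneOn_lyapunov (hp : ∀ i, 0 < p i) (hq : ∀ j, 0 < q j)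
    (hβconc : ∀ t, β (t + 2) - β (t + 1) ≤ β (t + 1) - β t) {C : ℝ}
    (hC : ∀ P ∈ GammaStar (m := m) q, -C ≤ frob c P) :
    AntitoneOn (lyapunov p q c β C) (Set.Ici 1) := by
  refine antitoneOn_nat_Ici_of_succ_le fun t ht => ?_
  obtain ⟨s, rfl⟩ := Nat.exists_eq_add_of_le' ht
  have hmem := sinkPlan_succ_mem_GammaStar c β hp hq s
  have hdescent := lyapunov_succ_le hp hq hβconc hC (s + 1) hmem
  have hKL := KLmat_nonneg hmem.1 (sinkPlan_pos c β hp hq (s + 1 + 1))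
  rw [KLmat_self] at hdescent
  calc lyapunov p q c β C (s + 1 + 1) ≤ _ := hdescent
    _ ≤ lyapunov p q c β C (s + 1) := by rw [lyapunov]; linarith

lemma isMinOn_halfRelaxedObj_of_mapClusterPt (hp : ∀ i, 0 < p i) (hq : ∀ j, 0 < q j)
    (hβconc : ∀ t, β (t + 2) - β (t + 1) ≤ β (t + 1) - β t)
    (hαinf : Tendsto (fun t => β (t + 1) - β t) atTop (𝓝 αinf))
    (hz : MapClusterPt z atTop (sinkPlan p q c β)) :
    IsMinOn (halfRelaxedObj c p αinf) (GammaStar q) z := by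
  obtain ⟨C, hC⟩ := exists_neg_le_frob (m := m) c q
  obtain ⟨l, hl, hlim⟩ := mapClusterPt_iff_ultrafilter.1 hz
  have hlyapunov_lim :
      Tendsto (lyapunov p q c β C) l (𝓝 (halfRelaxedObj c p αinf z + αinf * C)) := by
    have hα := hαinf.mono_left hl
    have hKL := (continuous_KLvec_left fun i => (hp i).ne').comp
      (continuous_rowSum (m := m) (n := n))
    exact ((hα.mul (((continuous_frob c).tendsto z).comp hlim)).add
      ((hKL.tendsto z).comp hlim)).add (hα.mul_const C)
  have hlim_le (t : ℕ) : halfRelaxedObj c p αinf z + αinf * C ≤ lyapunov p q c β C (t + 1) := by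
    refine le_of_tendsto hlyapunov_lim ?_
    filter_upwards [hl (eventually_ge_atTop (t + 1))] with s hs
    exact antitoneOn_lyapunov hp hq hβconc hC t.succ_pos (t.succ_pos.trans_le hs) hs
  intro R hR
  have hupper : Tendsto (fun t => halfRelaxedObj c p (β (t + 1) - β t) R + (β (t + 1) - β t) * C)
      atTop (𝓝 (halfRelaxedObj c p αinf R + αinf * C)) :=
    ((hαinf.mul_const _).add_const _).add (hαinf.mul_const C)
  change halfRelaxedObj c p αinf z ≤ halfRelaxedObj c p αinf R
  rw [← add_le_add_iff_right (αinf * C)]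
  refine le_of_tendsto_of_forall_le_add_sub (D := fun t => -KLmat R (sinkPlan p q c β t)) (B := 0)
    hupper (.of_forall fun t => ?_) fun t => ?_
  · exact neg_nonpos.2 (KLmat_nonneg hR.1 (sinkPlan_pos c β hp hq t))
  · linarith [hlim_le t, lyapunov_succ_le hp hq hβconc hC t hR]

lemma tendsto_eotObj {ι : Type*} {l : Filter ι} {s : ι → ℝ} {P : ι → Matrix (Fin m) (Fin n) ℝ}
    {b : ℝ} (hs : Tendsto (fun k => (s k)⁻¹) l (𝓝 b)) (hP : Tendsto P l (𝓝 z)) :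
    Tendsto (fun k => eotObj c (s k) (P k)) l (𝓝 (frob c z + b * KLmat z (piRef m n))) :=
  have hKL := continuous_KLmat_left fun i j => (piRef_pos (m := m) (n := n) i j).ne'
  (((continuous_frob c).tendsto z).comp hP).add (hs.mul ((hKL.tendsto z).comp hP))

lemma entropic_optimality_of_tendsto_scaling {ι : Type*} {l : Filter ι} [l.NeBot] {s : ι → ℝ}
    {P : ι → Matrix (Fin m) (Fin n) ℝ} {b : ℝ} (hspos : ∀ᶠ k in l, 0 < s k)
    (hs : Tendsto (fun k => (s k)⁻¹) l (𝓝 b)) (hP : ∀ k, P k ∈ scalingSet c (s k))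
    (hPpos : ∀ k i j, 0 < P k i j) (hcol : ∀ᶠ k in l, colSum (P k) = q)
    (hlim : Tendsto P l (𝓝 z)) (hz : ∀ i, 0 < rowSum z i) (hq : ∀ j, 0 < q j)
    (hR : R ∈ Gamma (rowSum z) q) :
    frob c z + b * KLmat z (piRef m n) ≤ frob c R + b * KLmat R (piRef m n) := by
  obtain ⟨Q, hQ, hQz, hQmem⟩ := exists_continuous_selection_Gamma hz hq hR
  have hQlim : Tendsto (fun k => Q (rowSum (P k))) l (𝓝 R) := by
    rw [← hQz]
    exact ((hQ.comp continuous_rowSum).tendsto z).comp hlim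
  refine le_of_tendsto_of_tendsto (tendsto_eotObj hs hlim) (tendsto_eotObj hs hQlim) ?_
  filter_upwards [hspos, hcol] with k hk hcol_k
  refine eotObj_le_of_mem_scalingSet hk (hP k) (hPpos k) ?_
  rw [hcol_k]
  refine hQmem _ (fun i => sum_nonneg fun j _ => (hPpos k i j).le) ?_
  rw [sum_rowSum_eq_sum_colSum, hcol_k]

lemma entropic_optimality_of_mapClusterPt (hp : ∀ i, 0 < p i) (hq : ∀ j, 0 < q j)
    (hβinf0 : βinf ≠ 0) (hβinf : Tendsto (fun t => ENNReal.ofReal (β t)) atTop (𝓝 βinf))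
    (hz : MapClusterPt z atTop (sinkPlan p q c β)) (hrow : rowSum z = p) (hR : R ∈ Gamma p q) :
    frob c z + (βinf⁻¹).toReal * KLmat z (piRef m n) ≤
      frob c R + (βinf⁻¹).toReal * KLmat R (piRef m n) := by
  obtain ⟨l, hl, hlim⟩ := mapClusterPt_iff_ultrafilter.1 hz
  subst hrow
  exact entropic_optimality_of_tendsto_scaling
    (hl (eventually_pos_of_tendsto_ofReal hβinf0 hβinf))
    ((tendsto_inv_of_tendsto_ofReal hβinf0 hβinf).mono_left hl)
    (sinkPlan_mem_scalingSet c β hp hq) (sinkPlan_pos c β hp hq)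
    (hl ((eventually_sinkPlan_mem_GammaStar c β hp hq).mono fun _ h => h.2)) hlim hp hq hR

end AccumulationPoints

section LimitFunctional

variable {m n : ℕ}

lemma rowSum_eq_of_isMinOn {p : Fin m → ℝ} {q : Fin n → ℝ} {c z R : Matrix (Fin m) (Fin n) ℝ}
    (hp : ∀ i, 0 < p i) (hz : z ∈ GammaStar q)
    (hmin : IsMinOn (halfRelaxedObj c p 0) (GammaStar q) z) (hR : R ∈ Gamma p q) :
    rowSum z = p := by
  have hz0 : ∀ i, 0 ≤ rowSum z i := fun i => sum_nonneg fun j _ => hz.1 i j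
  have hle : KLvec (rowSum z) p ≤ KLvec (rowSum R) p := by
    simpa [halfRelaxedObj] using hmin ⟨hR.1, hR.2.2⟩
  rw [hR.2.1, KLvec_self] at hle
  exact (KLvec_eq_zero_iff hz0 hp).1 (hle.antisymm (KLvec_nonneg hz0 hp))

lemma Fdoubly_zero_of_rowSum_eq {p : Fin m → ℝ} {π : Matrix (Fin m) (Fin n) ℝ}
    (hπ : rowSum π = p) (c : Matrix (Fin m) (Fin n) ℝ) (βinf : ℝ≥0∞) :
    Fdoubly c p 0 βinf π =
      ((frob c π + (βinf⁻¹).toReal * KLmat π (piRef m n) : ℝ) : EReal) := by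
  simp [Fdoubly, hπ]

lemma Fdoubly_zero_of_rowSum_ne {p : Fin m → ℝ} {π : Matrix (Fin m) (Fin n) ℝ}
    (hπ : rowSum π ≠ p) (c : Matrix (Fin m) (Fin n) ℝ) (βinf : ℝ≥0∞) :
    Fdoubly c p 0 βinf π = ⊤ := by
  simp only [Fdoubly, hπ, if_true, if_false, EReal.coe_add_top]

lemma Fdoubly_top {α : ℝ} (hα : α ≠ 0) (c : Matrix (Fin m) (Fin n) ℝ) (p : Fin m → ℝ)
    (π : Matrix (Fin m) (Fin n) ℝ) :
    Fdoubly c p α ⊤ π = ((α⁻¹ * halfRelaxedObj c p α π : ℝ) : EReal) := by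
  simp only [Fdoubly, hα, if_false, halfRelaxedObj, ENNReal.inv_top, ENNReal.toReal_zero, zero_mul,
    add_zero, ← EReal.coe_add, mul_add, inv_mul_cancel_left₀ hα]

end LimitFunctional

lemma neZero_of_mem_simplexPos {k : ℕ} {p : Fin k → ℝ} (hp : p ∈ simplexPos k) : NeZero k := by
  refine ⟨fun hk => ?_⟩
  subst hk
  simpa using hp.2

lemma limit_ne_zero_of_monotone {β : ℕ → ℝ} {βinf : ℝ≥0∞} (hβ0 : 0 < β 0) (hβmono : Monotone β)
    (hβinf : Tendsto (fun t => ENNReal.ofReal (β t)) atTop (𝓝 βinf)) : βinf ≠ 0 :=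
  have hle : ENNReal.ofReal (β 0) ≤ βinf :=
    ge_of_tendsto' hβinf fun t => ENNReal.ofReal_le_ofReal (hβmono t.zero_le)
  ((ENNReal.ofReal_pos.2 hβ0).trans_le hle).ne'

end AnnealedSinkhorn

open AnnealedSinkhorn

theorem annealed_sinkhorn_convergence_general {m n : ℕ} [NeZero m] [NeZero n]
    (p : Fin m → ℝ) (q : Fin n → ℝ) (c : Matrix (Fin m) (Fin n) ℝ)
    (hp : ∀ i, 0 < p i) (hq : ∀ j, 0 < q j)
    (β : ℕ → ℝ) (hβconc : ∀ t, β (t + 2) - β (t + 1) ≤ β (t + 1) - β t)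
    (βinf : ℝ≥0∞) (hβinf0 : βinf ≠ 0)
    (hβinf : Tendsto (fun t => ENNReal.ofReal (β t)) atTop (𝓝 βinf))
    (αinf : ℝ) (hαinf : Tendsto (fun t => β (t + 1) - β t) atTop (𝓝 αinf)) :
    (∃ πinf, MapClusterPt πinf atTop (sinkPlan p q c β)) ∧
      ∀ πinf, MapClusterPt πinf atTop (sinkPlan p q c β) →
        πinf ∈ GammaStar q ∧
          ∀ π' ∈ GammaStar (m := m) q, Fdoubly c p αinf βinf πinf ≤ Fdoubly c p αinf βinf π' := by
  refine ⟨exists_mapClusterPt_sinkPlan c β hp hq, fun z hz => ?_⟩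
  have hzmem := mem_GammaStar_of_mapClusterPt hp hq hz
  have hmin := isMinOn_halfRelaxedObj_of_mapClusterPt hp hq hβconc hαinf hz
  refine ⟨hzmem, fun R hR => ?_⟩
  rcases eq_or_ne αinf 0 with rfl | hα
  · by_cases hRp : rowSum R = p
    · have hRmem : R ∈ Gamma p q := ⟨hR.1, hRp, hR.2⟩
      have hzp := rowSum_eq_of_isMinOn hp hzmem hmin hRmem
      rw [Fdoubly_zero_of_rowSum_eq hzp, Fdoubly_zero_of_rowSum_eq hRp, EReal.coe_le_coe_iff]
      exact entropic_optimality_of_mapClusterPt hp hq hβinf0 hβinf hz hzp hRmem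
    · exact le_top.trans_eq (Fdoubly_zero_of_rowSum_ne hRp c βinf).symm
  · obtain rfl := eq_top_of_increment_limit_ne_zero hβinf0 hβinf hαinf hα
    have hα0 := increment_limit_nonneg hβinf0 hβinf hαinf
    rw [Fdoubly_top hα, Fdoubly_top hα, EReal.coe_le_coe_iff]
    exact mul_le_mul_of_nonneg_left (hmin hR) (inv_nonneg.2 hα0)

/-- Theorem: Convergence of Annealed Sinkhorn, general form.
For a positive, nondecreasing, concave annealing schedule with `β_t → β_∞ ∈ (0,∞]` and
`α_t = β_t - β_{t-1} → α_∞ ∈ [0,∞)`, the iterates of Annealed Sinkhorn have at least one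
accumulation point, and every accumulation point minimizes `F_{α∞,β∞}` over `Γ(*,q)`. -/
theorem annealed_sinkhorn_convergence
    {m n : ℕ} (p : Fin m → ℝ) (q : Fin n → ℝ) (c : Matrix (Fin m) (Fin n) ℝ)
    (hp : p ∈ simplexPos m) (hq : q ∈ simplexPos n)
    (β : ℕ → ℝ) (hβpos : ∀ t, 0 < β t) (hβmono : Monotone β)
    (hβconc : ∀ t, β (t + 2) - β (t + 1) ≤ β (t + 1) - β t)
    (βinf : ℝ≥0∞) (hβinf : Tendsto (fun t => ENNReal.ofReal (β t)) atTop (𝓝 βinf))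
    (αinf : ℝ) (hαinf : Tendsto (fun t => β (t + 1) - β t) atTop (𝓝 αinf)) :
    (∃ πinf, MapClusterPt πinf atTop (sinkPlan p q c β)) ∧
      ∀ πinf, MapClusterPt πinf atTop (sinkPlan p q c β) →
        πinf ∈ GammaStar q ∧
          ∀ π' ∈ GammaStar (m := m) q, Fdoubly c p αinf βinf πinf ≤ Fdoubly c p αinf βinf π' := by
  have := neZero_of_mem_simplexPos hp
  have := neZero_of_mem_simplexPos hq
  exact annealed_sinkhorn_convergence_general p q c hp.1 hq.1 β hβconc βinf
    (limit_ne_zero_of_monotone (hβpos 0) hβmono hβinf) hβinf αinf hαinf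

end
end

section
/- Let p ∈ Δ*_m, q ∈ Δ*_n, c ∈ ℝ^{m×n}, and let (β_t)_{t≥0} be a positive, nondecreasing, concave annealing schedule such that β_t → +∞ and α_t = β_t − β_{t−1} → 0. Let (π_t) be the sequence generated by Annealed Sinkhorn. Then every accumulation point of (π_t) is an optimal transport plan, i.e. a minimizer of ⟨c,π⟩ over Γ(p,q). -/
open Finset Filter Topology ENNReal

noncomputable section

/-!
Along the iterates, `log π_t` differs from `-β_t c` by a function of `i` plus a function of `j`,
and `log a_{t+1} - log a_t = log p - log (π_t 𝟙)`. Pairing `log π_{t+1} - log π_t` with a coupling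
whose second marginal is `q` therefore leaves one quantity that does not depend on the coupling,
the dual gain `G_t = ⟨q, log b_{t+1} - log b_t⟩`. Three couplings give three facts:

* with `π_t` and Gibbs' inequality, `G_t ≤ KL(π_t 𝟙 | p) + α_{t+1} ⟨c, π_t⟩`;
* with `π_{t+1}` and the data processing inequality,
  `KL(π_{t+1} 𝟙 | p) + α_{t+1} ⟨c, π_{t+1}⟩ ≤ G_t`;
* with any plan in `Γ(p, q)`, `G_t` is at most `O(α_{t+1})` plus a telescoping term bounded above.

If `c ≥ -M`, concavity of `β` and the first two facts make `G_t + α_{t+1} M` nonincreasing and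
nonnegative; the third one makes its Cesàro means tend to a nonpositive limit. It thus tends to `0`
and dominates `KL(π_{t+1} 𝟙 | p)`, so the first marginals converge to `p`.

Pairing `log π_t` itself with `π_t` and with a competitor bounds the suboptimality of `π_t` by
`O(1/β_t)` plus the marginal error weighted by `β_t⁻¹ log a_t`, which is bounded up to an additive
constant.
-/

section ScalarLemmas

lemma mul_log_div (x : ℝ) {y : ℝ} (hy : y ≠ 0) :
    x * Real.log (x / y) = x * Real.log x - x * Real.log y := by
  rcases eq_or_ne x 0 with rfl | hx
  · simp
  · rw [Real.log_div hx hy, mul_sub]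

lemma sq_sqrt_sub_sqrt_le_mul_log_div_sub_add {x y : ℝ} (hx : 0 ≤ x) (hy : 0 < y) :
    (√x - √y) ^ 2 ≤ x * Real.log (x / y) - x + y := by
  rcases hx.eq_or_lt with rfl | hx
  · simp [hy.le]
  have hsx := Real.sqrt_pos.2 hx
  have hlog : 1 - √y / √x ≤ Real.log (x / y) / 2 := by
    have h := Real.one_sub_inv_le_log_of_pos (Real.sqrt_pos.2 (div_pos hx hy))
    rwa [Real.log_sqrt (div_pos hx hy).le, Real.sqrt_div hx.le, inv_div] at h
  have hcross : x * (√y / √x) = √x * √y := by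
    nth_rw 1 [← Real.mul_self_sqrt hx.le]
    rw [mul_assoc, mul_div_cancel₀ _ hsx.ne']
  nlinarith [mul_le_mul_of_nonneg_left hlog hx.le, Real.sq_sqrt hx.le, Real.sq_sqrt hy.le]

lemma mul_log_div_sub_add_nonneg {x y : ℝ} (hx : 0 ≤ x) (hy : 0 < y) :
    0 ≤ x * Real.log (x / y) - x + y :=
  (sq_nonneg _).trans (sq_sqrt_sub_sqrt_le_mul_log_div_sub_add hx hy)

lemma sum_mul_log_sum_div_sum_le {ι : Type*} (s : Finset ι) {x y : ι → ℝ}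
    (hx : ∀ i ∈ s, 0 ≤ x i) (hy : ∀ i ∈ s, 0 < y i) :
    (∑ i ∈ s, x i) * Real.log ((∑ i ∈ s, x i) / ∑ i ∈ s, y i) ≤
      ∑ i ∈ s, x i * Real.log (x i / y i) := by
  rcases s.eq_empty_or_nonempty with rfl | hs
  · simp
  set Y := ∑ i ∈ s, y i
  have hYpos : 0 < Y := sum_pos hy hs
  have jensen := Real.convexOn_mul_log.map_sum_le (t := s) (w := fun i => y i / Y)
    (p := fun i => x i / y i) (fun i hi => (div_pos (hy i hi) hYpos).le)
    (by rw [← sum_div, div_self hYpos.ne']) (fun i hi => div_nonneg (hx i hi) (hy i hi).le)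
  have hweight : ∀ i ∈ s, y i / Y * (x i / y i) = x i / Y := fun i hi => by
    field_simp [(hy i hi).ne']
  have hentropy : ∑ i ∈ s, y i / Y * (x i / y i) * Real.log (x i / y i) =
      (∑ i ∈ s, x i * Real.log (x i / y i)) / Y := by
    rw [sum_div]
    exact sum_congr rfl fun i hi => by rw [hweight i hi, div_mul_eq_mul_div]
  simp only [smul_eq_mul, ← mul_assoc] at jensen
  rwa [sum_congr rfl hweight, hentropy, ← sum_div, div_mul_eq_mul_div,
    div_le_div_iff_of_pos_right hYpos] at jensen

lemma tendsto_zero_of_antitone_of_le_telescoping {S ε L : ℕ → ℝ} {B : ℝ} (hanti : Antitone S)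
    (hnonneg : ∀ t, 0 ≤ S t) (hε : Tendsto ε atTop (𝓝 0)) (hL : ∀ t, L t ≤ B)
    (hS : ∀ t, S t ≤ ε t + (L (t + 1) - L t)) : Tendsto S atTop (𝓝 0) := by
  have hlim := tendsto_atTop_ciInf hanti ⟨0, Set.forall_mem_range.2 hnonneg⟩
  have hmean : ∀ T : ℕ, (T : ℝ)⁻¹ * ∑ t ∈ range T, S t ≤
      (T : ℝ)⁻¹ * ∑ t ∈ range T, ε t + (T : ℝ)⁻¹ * (B - L 0) := fun T => by
    rw [← mul_add]
    gcongr
    calc ∑ t ∈ range T, S t ≤ ∑ t ∈ range T, (ε t + (L (t + 1) - L t)) := sum_le_sum fun t _ => hS t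
      _ = ∑ t ∈ range T, ε t + (L T - L 0) := by rw [sum_add_distrib, sum_range_sub]
      _ ≤ ∑ t ∈ range T, ε t + (B - L 0) := by gcongr; exact hL T
  have hbound : Tendsto (fun T : ℕ => (T : ℝ)⁻¹ * ∑ t ∈ range T, ε t + (T : ℝ)⁻¹ * (B - L 0))
      atTop (𝓝 0) := by
    simpa using hε.cesaro.add (tendsto_inv_atTop_nhds_zero_nat.mul_const (B - L 0))
  have hle : ⨅ t, S t ≤ 0 := le_of_tendsto_of_tendsto' hlim.cesaro hbound hmean
  rwa [hle.antisymm (Real.iInf_nonneg hnonneg)] at hlim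

end ScalarLemmas

section Matrices

variable {m n : ℕ}

lemma frob_sub_left (c d π : Matrix (Fin m) (Fin n) ℝ) :
    frob (c - d) π = frob c π - frob d π := by
  simp only [frob, Matrix.sub_apply, sub_mul, sum_sub_distrib]

lemma continuous_frob (c : Matrix (Fin m) (Fin n) ℝ) : Continuous (frob c) := by
  unfold frob; fun_prop

lemma continuous_rowSum : Continuous (rowSum : Matrix (Fin m) (Fin n) ℝ → Fin m → ℝ) := by
  unfold rowSum; fun_prop

lemma continuous_colSum : Continuous (colSum : Matrix (Fin m) (Fin n) ℝ → Fin n → ℝ) := by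
  unfold colSum; fun_prop

lemma sum_rowSum_eq_sum_colSum (π : Matrix (Fin m) (Fin n) ℝ) :
    ∑ i, rowSum π i = ∑ j, colSum π j := sum_comm

lemma mul_sum_rowSum_le_frob {c π : Matrix (Fin m) (Fin n) ℝ} {l : ℝ} (hc : ∀ i j, l ≤ c i j)
    (hπ : ∀ i j, 0 ≤ π i j) : l * ∑ i, rowSum π i ≤ frob c π := by
  simp only [frob, rowSum, mul_sum]
  gcongr with i _ j _
  exacts [hπ i j, hc i j]

lemma exists_abs_entry_le (c : Matrix (Fin m) (Fin n) ℝ) : ∃ M, ∀ i j, |c i j| ≤ M := by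
  obtain ⟨M, hM⟩ := Finite.exists_le fun ij : Fin m × Fin n => |c ij.1 ij.2|
  exact ⟨M, fun i j => hM (i, j)⟩

lemma nonempty_of_mem_simplexPos {k : ℕ} {p : Fin k → ℝ} (hp : p ∈ simplexPos k) :
    Nonempty (Fin k) := by
  by_contra h
  rw [not_nonempty_iff] at h
  simpa using hp.2

lemma le_one_of_mem_simplexPos {k : ℕ} {p : Fin k → ℝ} (hp : p ∈ simplexPos k) (i : Fin k) :
    p i ≤ 1 :=
  hp.2 ▸ single_le_sum (fun i _ => (hp.1 i).le) (mem_univ i)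

lemma vecMulVec_mem_Gamma {p : Fin m → ℝ} {q : Fin n → ℝ} (hp : p ∈ simplexPos m)
    (hq : q ∈ simplexPos n) : Matrix.vecMulVec p q ∈ Gamma p q := by
  refine ⟨fun i j => (mul_pos (hp.1 i) (hq.1 j)).le, ?_, ?_⟩ <;> ext
  · simp [rowSum, Matrix.vecMulVec_apply, ← mul_sum, hq.2]
  · simp [colSum, Matrix.vecMulVec_apply, ← sum_mul, hp.2]

lemma frob_log_nonpos {P σ : Matrix (Fin m) (Fin n) ℝ} (hP : ∀ i j, 0 ≤ P i j)
    (hP1 : ∀ i j, P i j ≤ 1) (hσ : ∀ i j, 0 ≤ σ i j) : frob (P.map Real.log) σ ≤ 0 :=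
  sum_nonpos fun i _ => sum_nonpos fun j _ =>
    mul_nonpos_of_nonpos_of_nonneg (Real.log_nonpos (hP i j) (hP1 i j)) (hσ i j)

lemma neg_frob_log_self_le {P : Matrix (Fin m) (Fin n) ℝ} (hP : ∀ i j, 0 ≤ P i j) :
    -frob (P.map Real.log) P ≤ m * n := by
  calc -frob (P.map Real.log) P = ∑ i, ∑ j, (P i j).negMulLog := by
        simp [frob, Real.negMulLog, mul_comm]
    _ ≤ ∑ _i : Fin m, ∑ _j : Fin n, (1 : ℝ) := by
        gcongr with i _ j _
        linarith [Real.negMulLog_le_one_sub_self (hP i j), hP i j]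
    _ = m * n := by simp

end Matrices

section KullbackLeibler

variable {m n k : ℕ}

lemma KLvec_eq_dotProduct (a : Fin k → ℝ) {b : Fin k → ℝ} (hb : ∀ i, b i ≠ 0) :
    KLvec a b = a ⬝ᵥ (Real.log ∘ a - Real.log ∘ b) - ∑ i, a i + ∑ i, b i := by
  simp only [KLvec, mul_log_div _ (hb _), sum_add_distrib, sum_sub_distrib, dotProduct,
    Pi.sub_apply, Function.comp_apply, mul_sub]

lemma KLmat_eq_frob (P : Matrix (Fin m) (Fin n) ℝ) {Q : Matrix (Fin m) (Fin n) ℝ}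
    (hQ : ∀ i j, Q i j ≠ 0) :
    KLmat P Q = frob (P.map Real.log - Q.map Real.log) P
      - ∑ i, rowSum P i + ∑ i, rowSum Q i := by
  rw [frob_sub_left]
  simp only [KLmat, mul_log_div _ (hQ _ _), sum_add_distrib, sum_sub_distrib, frob, rowSum,
    Matrix.map_apply, mul_comm]

lemma KLvec_nonneg {a b : Fin k → ℝ} (ha : ∀ i, 0 ≤ a i) (hb : ∀ i, 0 < b i) : 0 ≤ KLvec a b :=
  sum_nonneg fun i _ => mul_log_div_sub_add_nonneg (ha i) (hb i)

lemma KLmat_nonneg {P Q : Matrix (Fin m) (Fin n) ℝ} (hP : ∀ i j, 0 ≤ P i j)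
    (hQ : ∀ i j, 0 < Q i j) : 0 ≤ KLmat P Q :=
  sum_nonneg fun i _ => KLvec_nonneg (hP i) (hQ i)

lemma KLvec_rowSum_le_KLmat {P Q : Matrix (Fin m) (Fin n) ℝ} (hP : ∀ i j, 0 ≤ P i j)
    (hQ : ∀ i j, 0 < Q i j) : KLvec (rowSum P) (rowSum Q) ≤ KLmat P Q := by
  refine sum_le_sum fun i _ => ?_
  rw [sum_add_distrib, sum_sub_distrib]
  exact add_le_add (sub_le_sub_right
    (sum_mul_log_sum_div_sum_le univ (fun j _ => hP i j) fun j _ => hQ i j) _) le_rfl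

lemma tendsto_of_tendsto_KLvec_zero {T : Type*} {l : Filter T} {x : T → Fin k → ℝ} {p : Fin k → ℝ}
    (hx : ∀ t i, 0 ≤ x t i) (hp : ∀ i, 0 < p i)
    (h : Tendsto (fun t => KLvec (x t) p) l (𝓝 0)) : Tendsto x l (𝓝 p) := by
  refine tendsto_pi_nhds.2 fun i => ?_
  have hle : ∀ t, (√(x t i) - √(p i)) ^ 2 ≤ KLvec (x t) p := fun t =>
    (sq_sqrt_sub_sqrt_le_mul_log_div_sub_add (hx t i) (hp i)).trans <|
      single_le_sum (f := fun i => x t i * Real.log (x t i / p i) - x t i + p i)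
        (fun i _ => mul_log_div_sub_add_nonneg (hx t i) (hp i)) (mem_univ i)
  have hsq : Tendsto (fun t => |√(x t i) - √(p i)|) l (𝓝 0) := by
    simpa [Real.sqrt_sq_eq_abs] using (squeeze_zero (fun _ => sq_nonneg _) hle h).sqrt
  have hsqrt := (tendsto_sub_nhds_zero_iff.1 ((tendsto_zero_iff_abs_tendsto_zero _).2 hsq)).pow 2
  simpa only [Real.sq_sqrt (hx _ i), Real.sq_sqrt (hp i).le] using hsqrt

end KullbackLeibler

section Iterates

variable {m n : ℕ} {p : Fin m → ℝ} {q : Fin n → ℝ} (c : Matrix (Fin m) (Fin n) ℝ) (β : ℕ → ℝ)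

lemma sinkAB_pos (hp : p ∈ simplexPos m) (hq : q ∈ simplexPos n) (t : ℕ) :
    (∀ i, 0 < (sinkAB p q c β t).1 i) ∧ ∀ j, 0 < (sinkAB p q c β t).2 j := by
  have := nonempty_of_mem_simplexPos hp
  have := nonempty_of_mem_simplexPos hq
  induction t with
  | zero => simp [sinkAB]
  | succ t ih =>
    have ha : ∀ i, 0 < (sinkAB p q c β (t + 1)).1 i := fun i =>
      div_pos (hp.1 i) (sum_pos (fun j _ => mul_pos (Real.exp_pos _) (ih.2 j)) univ_nonempty)
    exact ⟨ha, fun j =>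
      div_pos (hq.1 j) (sum_pos (fun i _ => mul_pos (Real.exp_pos _) (ha i)) univ_nonempty)⟩

lemma sinkPlan_pos (hp : p ∈ simplexPos m) (hq : q ∈ simplexPos n) (t : ℕ) (i : Fin m)
    (j : Fin n) : 0 < sinkPlan p q c β t i j :=
  mul_pos (mul_pos ((sinkAB_pos c β hp hq t).1 i) (Real.exp_pos _)) ((sinkAB_pos c β hp hq t).2 j)

lemma rowSum_sinkPlan_pos (hp : p ∈ simplexPos m) (hq : q ∈ simplexPos n) (t : ℕ) (i : Fin m) :
    0 < rowSum (sinkPlan p q c β t) i :=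
  have := nonempty_of_mem_simplexPos hq
  sum_pos (fun j _ => sinkPlan_pos c β hp hq t i j) univ_nonempty

lemma colSum_sinkPlan_succ (hp : p ∈ simplexPos m) (hq : q ∈ simplexPos n) (t : ℕ) :
    colSum (sinkPlan p q c β (t + 1)) = q := by
  have := nonempty_of_mem_simplexPos hp
  ext j
  have hpos : 0 < ∑ i, gibbs c (β (t + 1)) i j * (sinkAB p q c β (t + 1)).1 i :=
    sum_pos (fun i _ => mul_pos (Real.exp_pos _) ((sinkAB_pos c β hp hq (t + 1)).1 i))
      univ_nonempty
  have hb : (sinkAB p q c β (t + 1)).2 j =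
    q j / ∑ i, gibbs c (β (t + 1)) i j * (sinkAB p q c β (t + 1)).1 i := rfl
  simp only [colSum, sinkPlan, ← sum_mul, hb, mul_comm ((sinkAB p q c β (t + 1)).1 _)]
  exact mul_div_cancel₀ _ hpos.ne'

lemma sum_rowSum_sinkPlan_succ (hp : p ∈ simplexPos m) (hq : q ∈ simplexPos n) (t : ℕ) :
    ∑ i, rowSum (sinkPlan p q c β (t + 1)) i = 1 := by
  rw [sum_rowSum_eq_sum_colSum, colSum_sinkPlan_succ c β hp hq, hq.2]

lemma sinkPlan_succ_le_one (hp : p ∈ simplexPos m) (hq : q ∈ simplexPos n) (t : ℕ) (i : Fin m)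
    (j : Fin n) : sinkPlan p q c β (t + 1) i j ≤ 1 :=
  calc sinkPlan p q c β (t + 1) i j ≤ colSum (sinkPlan p q c β (t + 1)) j :=
        single_le_sum (f := fun i => sinkPlan p q c β (t + 1) i j)
          (fun i _ => (sinkPlan_pos c β hp hq (t + 1) i j).le) (mem_univ i)
    _ = q j := by rw [colSum_sinkPlan_succ c β hp hq]
    _ ≤ 1 := le_one_of_mem_simplexPos hq j

/-- The logarithmic row scaling `log a_t`, i.e. `β_t` times the first dual potential. -/
def logRowScaling (p : Fin m → ℝ) (q : Fin n → ℝ) (c : Matrix (Fin m) (Fin n) ℝ) (β : ℕ → ℝ)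
    (t : ℕ) : Fin m → ℝ := Real.log ∘ (sinkAB p q c β t).1

/-- The logarithmic column scaling `log b_t`, i.e. `β_t` times the second dual potential. -/
def logColScaling (p : Fin m → ℝ) (q : Fin n → ℝ) (c : Matrix (Fin m) (Fin n) ℝ) (β : ℕ → ℝ)
    (t : ℕ) : Fin n → ℝ := Real.log ∘ (sinkAB p q c β t).2

lemma log_sinkPlan (hp : p ∈ simplexPos m) (hq : q ∈ simplexPos n) (t : ℕ) (i : Fin m)
    (j : Fin n) : Real.log (sinkPlan p q c β t i j) =
      logRowScaling p q c β t i - β t * c i j + logColScaling p q c β t j := by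
  obtain ⟨ha, hb⟩ := sinkAB_pos c β hp hq t
  rw [sinkPlan, gibbs, Real.log_mul (mul_pos (ha i) (Real.exp_pos _)).ne' (hb j).ne',
    Real.log_mul (ha i).ne' (Real.exp_pos _).ne', Real.log_exp, ← sub_eq_add_neg]
  rfl

lemma frob_log_sinkPlan (hp : p ∈ simplexPos m) (hq : q ∈ simplexPos n) (t : ℕ)
    {π : Matrix (Fin m) (Fin n) ℝ} (hπ : colSum π = q) :
    frob ((sinkPlan p q c β t).map Real.log) π =
      rowSum π ⬝ᵥ logRowScaling p q c β t - β t * frob c π + q ⬝ᵥ logColScaling p q c β t := by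
  have hcol : q ⬝ᵥ logColScaling p q c β t = ∑ i, ∑ j, π i j * logColScaling p q c β t j := by
    rw [sum_comm, ← hπ]
    simp only [dotProduct, colSum, sum_mul]
  rw [hcol]
  simp only [frob, rowSum, dotProduct, sum_mul, mul_sum, ← sum_sub_distrib, ← sum_add_distrib,
    Matrix.map_apply, log_sinkPlan c β hp hq]
  refine sum_congr rfl fun i _ => sum_congr rfl fun j _ => ?_
  ring

lemma logRowScaling_succ_apply (hp : p ∈ simplexPos m) (hq : q ∈ simplexPos n) (t : ℕ)
    (i : Fin m) : logRowScaling p q c β (t + 1) i =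
      Real.log (p i) - Real.log (∑ j, gibbs c (β t) i j * (sinkAB p q c β t).2 j) := by
  have := nonempty_of_mem_simplexPos hq
  exact Real.log_div (hp.1 i).ne'
    (sum_pos (fun j _ => mul_pos (Real.exp_pos _) ((sinkAB_pos c β hp hq t).2 j))
      univ_nonempty).ne'

lemma logRowScaling_succ_sub (hp : p ∈ simplexPos m) (hq : q ∈ simplexPos n) (t : ℕ) :
    logRowScaling p q c β (t + 1) - logRowScaling p q c β t =
      Real.log ∘ p - Real.log ∘ rowSum (sinkPlan p q c β t) := by
  ext i
  have hrow : rowSum (sinkPlan p q c β t) i =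
      (sinkAB p q c β t).1 i * ∑ j, gibbs c (β t) i j * (sinkAB p q c β t).2 j := by
    simp only [rowSum, sinkPlan, mul_sum, mul_assoc]
  have hrow_ne := (rowSum_sinkPlan_pos c β hp hq t i).ne'
  rw [hrow] at hrow_ne
  simp only [Pi.sub_apply, Function.comp_apply, logRowScaling_succ_apply c β hp hq, hrow,
    Real.log_mul (left_ne_zero_of_mul hrow_ne) (right_ne_zero_of_mul hrow_ne)]
  simp only [logRowScaling, Function.comp_apply]
  ring

end Iterates

section MarginalConvergence

variable {m n : ℕ} {p : Fin m → ℝ} {q : Fin n → ℝ} (c : Matrix (Fin m) (Fin n) ℝ) (β : ℕ → ℝ)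

/-- The increment `G_t = ⟨q, log b_{t+1} - log b_t⟩` of the `q`-part of the dual objective. It is
the Lyapunov function of the iteration, once `(β_{t+1} - β_t) M` is added for a lower bound `-M` of
the cost. -/
def dualGain (p : Fin m → ℝ) (q : Fin n → ℝ) (c : Matrix (Fin m) (Fin n) ℝ) (β : ℕ → ℝ)
    (t : ℕ) : ℝ := q ⬝ᵥ (logColScaling p q c β (t + 1) - logColScaling p q c β t)

lemma frob_log_sinkPlan_succ_sub (hp : p ∈ simplexPos m) (hq : q ∈ simplexPos n) (t : ℕ)
    {π : Matrix (Fin m) (Fin n) ℝ} (hπ : colSum π = q) :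
    frob ((sinkPlan p q c β (t + 1)).map Real.log - (sinkPlan p q c β t).map Real.log) π =
      rowSum π ⬝ᵥ (Real.log ∘ p - Real.log ∘ rowSum (sinkPlan p q c β t))
        - (β (t + 1) - β t) * frob c π + dualGain p q c β t := by
  rw [frob_sub_left, frob_log_sinkPlan c β hp hq (t + 1) hπ, frob_log_sinkPlan c β hp hq t hπ,
    ← logRowScaling_succ_sub c β hp hq, dualGain, dotProduct_sub, dotProduct_sub]
  ring

lemma KLvec_rowSum_add_le_dualGain (hp : p ∈ simplexPos m) (hq : q ∈ simplexPos n) (t : ℕ) :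
    KLvec (rowSum (sinkPlan p q c β (t + 1))) p
        + (β (t + 1) - β t) * frob c (sinkPlan p q c β (t + 1)) ≤ dualGain p q c β t := by
  have hKL := KLvec_rowSum_le_KLmat (P := sinkPlan p q c β (t + 1)) (Q := sinkPlan p q c β t)
    (fun i j => (sinkPlan_pos c β hp hq (t + 1) i j).le) (sinkPlan_pos c β hp hq t)
  rw [KLvec_eq_dotProduct _ fun i => (rowSum_sinkPlan_pos c β hp hq t i).ne',
    KLmat_eq_frob _ fun i j => (sinkPlan_pos c β hp hq t i j).ne',
    frob_log_sinkPlan_succ_sub c β hp hq t (colSum_sinkPlan_succ c β hp hq t)] at hKL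
  rw [KLvec_eq_dotProduct _ fun i => (hp.1 i).ne', sum_rowSum_sinkPlan_succ c β hp hq, hp.2]
  simp only [dotProduct_sub] at hKL ⊢
  linarith

lemma dualGain_succ_le_KLvec_rowSum_add (hp : p ∈ simplexPos m) (hq : q ∈ simplexPos n) (t : ℕ) :
    dualGain p q c β (t + 1) ≤ KLvec (rowSum (sinkPlan p q c β (t + 1))) p
        + (β (t + 2) - β (t + 1)) * frob c (sinkPlan p q c β (t + 1)) := by
  have hKL := KLmat_nonneg (P := sinkPlan p q c β (t + 1)) (Q := sinkPlan p q c β (t + 2))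
    (fun i j => (sinkPlan_pos c β hp hq (t + 1) i j).le) (sinkPlan_pos c β hp hq (t + 2))
  have hstep := frob_log_sinkPlan_succ_sub c β hp hq (t + 1) (colSum_sinkPlan_succ c β hp hq t)
  rw [KLmat_eq_frob _ fun i j => (sinkPlan_pos c β hp hq (t + 2) i j).ne',
    sum_rowSum_sinkPlan_succ c β hp hq, sum_rowSum_sinkPlan_succ c β hp hq] at hKL
  rw [KLvec_eq_dotProduct _ fun i => (hp.1 i).ne', sum_rowSum_sinkPlan_succ c β hp hq, hp.2]
  simp only [dotProduct_sub, frob_sub_left] at hKL hstep ⊢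
  linarith

lemma dualGain_succ_le_of_mem_Gamma (hp : p ∈ simplexPos m) (hq : q ∈ simplexPos n) (t : ℕ)
    {σ : Matrix (Fin m) (Fin n) ℝ} (hσ : σ ∈ Gamma p q) :
    dualGain p q c β (t + 1) ≤ (β (t + 2) - β (t + 1)) * frob c σ
      + (frob ((sinkPlan p q c β (t + 2)).map Real.log) σ
        - frob ((sinkPlan p q c β (t + 1)).map Real.log) σ) := by
  have hrow_pos := rowSum_sinkPlan_pos c β hp hq (t + 1)
  have hKL := KLvec_nonneg (fun i => (hp.1 i).le) hrow_pos
  have hstep := frob_log_sinkPlan_succ_sub c β hp hq (t + 1) hσ.2.2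
  rw [KLvec_eq_dotProduct _ fun i => (hrow_pos i).ne', sum_rowSum_sinkPlan_succ c β hp hq,
    hp.2] at hKL
  rw [frob_sub_left, hσ.2.1] at hstep
  linarith

variable {c β}

lemma frob_sinkPlan_succ_add_nonneg (hp : p ∈ simplexPos m) (hq : q ∈ simplexPos n) {M : ℝ}
    (hM : ∀ i j, -M ≤ c i j) (t : ℕ) : 0 ≤ frob c (sinkPlan p q c β (t + 1)) + M := by
  have h := mul_sum_rowSum_le_frob hM fun i j => (sinkPlan_pos c β hp hq (t + 1) i j).le
  rw [sum_rowSum_sinkPlan_succ c β hp hq] at h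
  linarith

lemma antitone_dualGain_succ_add (hp : p ∈ simplexPos m) (hq : q ∈ simplexPos n) {M : ℝ}
    (hM : ∀ i j, -M ≤ c i j) (hβconc : ∀ t, β (t + 2) - β (t + 1) ≤ β (t + 1) - β t) :
    Antitone fun t => dualGain p q c β (t + 1) + (β (t + 2) - β (t + 1)) * M := by
  refine antitone_nat_of_succ_le fun t => ?_
  have hupper := dualGain_succ_le_KLvec_rowSum_add c β hp hq (t + 1)
  have hlower := KLvec_rowSum_add_le_dualGain c β hp hq (t + 1)
  have hconc := mul_le_mul_of_nonneg_right (hβconc (t + 1))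
    (frob_sinkPlan_succ_add_nonneg (β := β) hp hq hM (t + 1))
  linarith

lemma KLvec_rowSum_le_dualGain_add (hp : p ∈ simplexPos m) (hq : q ∈ simplexPos n) {M : ℝ}
    (hM : ∀ i j, -M ≤ c i j) {t : ℕ} (hβ : β t ≤ β (t + 1)) :
    KLvec (rowSum (sinkPlan p q c β (t + 1))) p ≤
      dualGain p q c β t + (β (t + 1) - β t) * M := by
  have hlower := KLvec_rowSum_add_le_dualGain c β hp hq t
  have hcost := mul_nonneg (sub_nonneg.2 hβ)
    (frob_sinkPlan_succ_add_nonneg (β := β) hp hq hM t)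
  linarith

lemma tendsto_dualGain_succ_add (hp : p ∈ simplexPos m) (hq : q ∈ simplexPos n) {M : ℝ}
    (hM : ∀ i j, -M ≤ c i j) (hβmono : Monotone β)
    (hβconc : ∀ t, β (t + 2) - β (t + 1) ≤ β (t + 1) - β t)
    (hα0 : Tendsto (fun t => β (t + 1) - β t) atTop (𝓝 0)) :
    Tendsto (fun t => dualGain p q c β (t + 1) + (β (t + 2) - β (t + 1)) * M) atTop (𝓝 0) := by
  have hplan := vecMulVec_mem_Gamma hp hq
  have hα1 : Tendsto (fun t => β (t + 2) - β (t + 1)) atTop (𝓝 0) :=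
    (tendsto_add_atTop_iff_nat 1).2 hα0
  refine tendsto_zero_of_antitone_of_le_telescoping (B := 0)
    (ε := fun t => (β (t + 2) - β (t + 1)) * (frob c (Matrix.vecMulVec p q) + M))
    (L := fun t => frob ((sinkPlan p q c β (t + 1)).map Real.log) (Matrix.vecMulVec p q))
    (antitone_dualGain_succ_add hp hq hM hβconc) (fun t => ?_) ?_ (fun t => ?_) fun t => ?_
  · exact (KLvec_nonneg (fun i => (rowSum_sinkPlan_pos c β hp hq (t + 2) i).le) hp.1).trans
      (KLvec_rowSum_le_dualGain_add hp hq hM (hβmono (t + 1).le_succ))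
  · simpa using hα1.mul_const (frob c (Matrix.vecMulVec p q) + M)
  · exact frob_log_nonpos (fun i j => (sinkPlan_pos c β hp hq (t + 1) i j).le)
      (sinkPlan_succ_le_one c β hp hq t) hplan.1
  · linarith [dualGain_succ_le_of_mem_Gamma c β hp hq t hplan]

variable (c) in
lemma tendsto_rowSum_sinkPlan (hp : p ∈ simplexPos m) (hq : q ∈ simplexPos n)
    (hβmono : Monotone β) (hβconc : ∀ t, β (t + 2) - β (t + 1) ≤ β (t + 1) - β t)
    (hα0 : Tendsto (fun t => β (t + 1) - β t) atTop (𝓝 0)) :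
    Tendsto (fun t => rowSum (sinkPlan p q c β t)) atTop (𝓝 p) := by
  obtain ⟨M, hM⟩ := exists_abs_entry_le c
  have hlower : ∀ i j, -M ≤ c i j := fun i j => (abs_le.1 (hM i j)).1
  have hrow_nonneg : ∀ t i, 0 ≤ rowSum (sinkPlan p q c β t) i := fun t i =>
    (rowSum_sinkPlan_pos c β hp hq t i).le
  refine (tendsto_add_atTop_iff_nat 2).1 <|
    tendsto_of_tendsto_KLvec_zero (fun t => hrow_nonneg (t + 2)) hp.1 ?_
  exact squeeze_zero (fun t => KLvec_nonneg (hrow_nonneg (t + 2)) hp.1)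
    (fun t => KLvec_rowSum_le_dualGain_add hp hq hlower (hβmono (t + 1).le_succ))
    (tendsto_dualGain_succ_add hp hq hlower hβmono hβconc hα0)

end MarginalConvergence

section Suboptimality

variable {m n : ℕ} {p : Fin m → ℝ} {q : Fin n → ℝ} {c : Matrix (Fin m) (Fin n) ℝ} {β : ℕ → ℝ}

lemma abs_log_sum_gibbs_mul_sub_le [Nonempty (Fin n)] {M γ : ℝ} (hγ : 0 ≤ γ)
    (hM : ∀ i j, |c i j| ≤ M) {b : Fin n → ℝ} (hb : ∀ j, 0 < b j) (i : Fin m) :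
    |Real.log (∑ j, gibbs c γ i j * b j) - Real.log (∑ j, b j)| ≤ γ * M := by
  have hbsum : 0 < ∑ j, b j := sum_pos (fun j _ => hb j) univ_nonempty
  have hKb : 0 < ∑ j, gibbs c γ i j * b j :=
    sum_pos (fun j _ => mul_pos (Real.exp_pos _) (hb j)) univ_nonempty
  have hexponent : ∀ j, |γ * c i j| ≤ γ * M := fun j => by
    rw [abs_mul, abs_of_nonneg hγ]
    exact mul_le_mul_of_nonneg_left (hM i j) hγ
  have hle : ∑ j, gibbs c γ i j * b j ≤ Real.exp (γ * M) * ∑ j, b j := by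
    rw [mul_sum]
    gcongr with j _
    · exact (hb j).le
    · exact Real.exp_le_exp.2 (by linarith [(abs_le.1 (hexponent j)).1])
  have hge : Real.exp (-(γ * M)) * ∑ j, b j ≤ ∑ j, gibbs c γ i j * b j := by
    rw [mul_sum]
    gcongr with j _
    · exact (hb j).le
    · exact Real.exp_le_exp.2 (by linarith [(abs_le.1 (hexponent j)).2])
  have hlog_le := Real.log_le_log hKb hle
  have hlog_ge := Real.log_le_log (mul_pos (Real.exp_pos _) hbsum) hge
  rw [Real.log_mul (Real.exp_pos _).ne' hbsum.ne', Real.log_exp] at hlog_le hlog_ge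
  exact abs_le.2 ⟨by linarith, by linarith⟩

lemma abs_logRowScaling_succ_add_le (hp : p ∈ simplexPos m) (hq : q ∈ simplexPos n) {M : ℝ}
    (hM : ∀ i j, |c i j| ≤ M) {t : ℕ} (hβ : 0 ≤ β t) (i : Fin m) :
    |logRowScaling p q c β (t + 1) i + Real.log (∑ j, (sinkAB p q c β t).2 j)| ≤
      |Real.log (p i)| + β t * M := by
  have := nonempty_of_mem_simplexPos hq
  rw [logRowScaling_succ_apply c β hp hq, sub_add]
  exact (abs_sub _ _).trans
    (add_le_add le_rfl (abs_log_sum_gibbs_mul_sub_le hβ hM (sinkAB_pos c β hp hq t).2 i))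

lemma dotProduct_logRowScaling_succ_le (hp : p ∈ simplexPos m) (hq : q ∈ simplexPos n) {M : ℝ}
    (hM : ∀ i j, |c i j| ≤ M) {t : ℕ} (hβ : 0 ≤ β t) {r : Fin m → ℝ} (hr : ∑ i, r i = 1) :
    (r - p) ⬝ᵥ logRowScaling p q c β (t + 1) ≤
      ∑ i, |r i - p i| * (|Real.log (p i)| + β t * M) := by
  -- `r - p` has total mass zero, so the scaling may be shifted by a constant.
  set κ := Real.log (∑ j, (sinkAB p q c β t).2 j)
  calc (r - p) ⬝ᵥ logRowScaling p q c β (t + 1)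
      = ∑ i, (r i - p i) * (logRowScaling p q c β (t + 1) i + κ) := by
        simp only [mul_add, sum_add_distrib, ← sum_mul, sum_sub_distrib, hr, hp.2, dotProduct,
          Pi.sub_apply, sub_self, zero_mul, add_zero]
    _ ≤ ∑ i, |r i - p i| * (|Real.log (p i)| + β t * M) := by
        refine sum_le_sum fun i _ => (le_abs_self _).trans ?_
        rw [abs_mul]
        exact mul_le_mul_of_nonneg_left (abs_logRowScaling_succ_add_le hp hq hM hβ i)
          (abs_nonneg _)

/-- An upper bound on `⟨c, π⟩ - OT(p, q)` for an iterate `π` at inverse temperature `γ` whose first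
marginal is `r`, where `M` bounds the entries of the cost. -/
def suboptimalityBound (n : ℕ) (p r : Fin m → ℝ) (M γ : ℝ) : ℝ :=
  m * n * γ⁻¹ + ∑ i, |r i - p i| * (|Real.log (p i)| * γ⁻¹ + M)

lemma frob_sinkPlan_succ_le (hp : p ∈ simplexPos m) (hq : q ∈ simplexPos n) {M : ℝ}
    (hM : ∀ i j, |c i j| ≤ M) {t : ℕ} (hβ : 0 ≤ β t) (hβsucc : 0 < β (t + 1))
    (hβle : β t ≤ β (t + 1)) {σ : Matrix (Fin m) (Fin n) ℝ} (hσ : σ ∈ Gamma p q) :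
    frob c (sinkPlan p q c β (t + 1)) ≤ frob c σ
      + suboptimalityBound n p (rowSum (sinkPlan p q c β (t + 1))) M (β (t + 1)) := by
  set P := sinkPlan p q c β (t + 1) with hP
  have hPnonneg : ∀ i j, 0 ≤ P i j := fun i j => (sinkPlan_pos c β hp hq (t + 1) i j).le
  have hself := frob_log_sinkPlan c β hp hq (t + 1) (colSum_sinkPlan_succ c β hp hq t)
  have hother := frob_log_sinkPlan c β hp hq (t + 1) hσ.2.2
  have hentropy := neg_frob_log_self_le hPnonneg
  have hcross := frob_log_nonpos hPnonneg (sinkPlan_succ_le_one c β hp hq t) hσ.1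
  have hdual : (rowSum P - p) ⬝ᵥ logRowScaling p q c β (t + 1) ≤
      ∑ i, |rowSum P i - p i| * (|Real.log (p i)| + β (t + 1) * M) := by
    refine (dotProduct_logRowScaling_succ_le hp hq hM hβ
      (sum_rowSum_sinkPlan_succ c β hp hq t)).trans ?_
    gcongr with i
    obtain ⟨j⟩ := nonempty_of_mem_simplexPos hq
    exact (abs_nonneg _).trans (hM i j)
  have hscaled : β (t + 1) * suboptimalityBound n p (rowSum P) M (β (t + 1)) =
      m * n + ∑ i, |rowSum P i - p i| * (|Real.log (p i)| + β (t + 1) * M) := by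
    rw [suboptimalityBound, mul_add, mul_sum]
    congr 1
    · field_simp
    · refine sum_congr rfl fun i _ => ?_
      field_simp
  rw [← hP] at hself hother
  rw [hσ.2.1] at hother
  rw [sub_dotProduct] at hdual
  refine le_of_mul_le_mul_left ?_ hβsucc
  linarith

lemma tendsto_suboptimalityBound {T : Type*} {l : Filter T} {r : T → Fin m → ℝ} {γ : T → ℝ} (M : ℝ)
    (hr : Tendsto r l (𝓝 p)) (hγ : Tendsto γ l atTop) :
    Tendsto (fun t => suboptimalityBound n p (r t) M (γ t)) l (𝓝 0) := by
  have hinv : Tendsto (fun t => (γ t)⁻¹) l (𝓝 0) := hγ.inv_tendsto_atTop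
  have herror : ∀ i, Tendsto (fun t => |r t i - p i|) l (𝓝 0) := fun i => by
    simpa using ((tendsto_pi_nhds.1 hr i).sub_const (p i)).abs
  simpa [suboptimalityBound] using (hinv.const_mul (m * n : ℝ)).add <|
    tendsto_finsetSum univ fun i _ =>
      (herror i).mul ((hinv.const_mul |Real.log (p i)|).add_const M)

end Suboptimality

/-- For a positive, nondecreasing, concave annealing schedule with
`β_t → +∞` and `α_t = β_t - β_{t-1} → 0`, every accumulation point of the Annealed
Sinkhorn iterates is an optimal transport plan. -/
theorem annealed_sinkhorn_solves_OT
    {m n : ℕ} (p : Fin m → ℝ) (q : Fin n → ℝ) (c : Matrix (Fin m) (Fin n) ℝ)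
    (hp : p ∈ simplexPos m) (hq : q ∈ simplexPos n)
    (β : ℕ → ℝ) (hβpos : ∀ t, 0 < β t) (hβmono : Monotone β)
    (hβconc : ∀ t, β (t + 2) - β (t + 1) ≤ β (t + 1) - β t)
    (hβtop : Tendsto β atTop atTop)
    (hα0 : Tendsto (fun t => β (t + 1) - β t) atTop (𝓝 0)) :
    ∀ πinf, MapClusterPt πinf atTop (sinkPlan p q c β) →
      πinf ∈ Gamma p q ∧ ∀ π' ∈ Gamma p q, frob c πinf ≤ frob c π' := by
  intro πinf hcluster
  obtain ⟨U, hU, hlim⟩ := mapClusterPt_iff_ultrafilter.1 hcluster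
  have hrow := tendsto_rowSum_sinkPlan c hp hq hβmono hβconc hα0
  have hev : ∀ᶠ t in (U : Filter ℕ), ∃ s, t = s + 1 :=
    hU <| (eventually_ge_atTop 1).mono fun t ht => Nat.exists_eq_add_of_le' ht
  have hplan : πinf ∈ Gamma p q := by
    refine ⟨fun i j => ?_, ?_, ?_⟩
    · exact ge_of_tendsto' (tendsto_pi_nhds.1 (tendsto_pi_nhds.1 hlim i) j)
        fun t => (sinkPlan_pos c β hp hq t i j).le
    · exact tendsto_nhds_unique ((continuous_rowSum.tendsto πinf).comp hlim) (hrow.mono_left hU)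
    · refine tendsto_nhds_unique ((continuous_colSum.tendsto πinf).comp hlim)
        (tendsto_const_nhds.congr' ?_)
      filter_upwards [hev] with _ ⟨s, hs⟩
      rw [Function.comp_apply, hs, colSum_sinkPlan_succ c β hp hq s]
  refine ⟨hplan, fun σ hσ => ?_⟩
  obtain ⟨M, hM⟩ := exists_abs_entry_le c
  have hgap := ((tendsto_suboptimalityBound (n := n) M hrow hβtop).mono_left hU).const_add
    (frob c σ)
  rw [add_zero] at hgap
  refine le_of_tendsto_of_tendsto (((continuous_frob c).tendsto πinf).comp hlim) hgap ?_
  filter_upwards [hev] with _ ⟨s, hs⟩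
  rw [Function.comp_apply, hs]
  exact frob_sinkPlan_succ_le hp hq hM (hβpos s).le (hβpos (s + 1)) (hβmono s.le_succ) hσ

end
end
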